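/- arXiv:1504.06522 — 6 statements merged into one kernel-verified Lean document; each statement's English description precedes it below -/
import Mathlib

section
/- For all triples (m1,m2,m3) and (m1',m2',m3') of nonnegative integers, S(m1+m1', m2+m2', m3+m3') = S(m1,m2,m3) + S(m1',m2',m3') (equality of subsets of Z^9, the right-hand side being a Minkowski sum). -/
open scoped Pointwise

/-- The set `S(m1,m2,m3)` of lattice points of the polytope `P(λ)` attached to the
dominant integral weight `λ = m1·ω₁ + m2·ω₂ + m3·ω₃` of the simple Lie algebra of
type `B₃`.  Coordinates: `s 0 = s₁, …, s 8 = s₉`. -/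
def SB3 (m1 m2 m3 : ℕ) : Set (Fin 9 → ℕ) :=
  {s |
    s 1 + s 2 + s 3 + s 7 + s 8 ≤ m1 + m2 + m3 ∧
    s 2 + s 3 + s 4 + s 7 + s 8 ≤ m1 + m2 + m3 ∧
    s 3 + s 4 + s 5 + s 7 + s 8 ≤ m1 + m2 + m3 ∧
    s 4 + s 5 + s 6 + s 7 + s 8 ≤ m1 + m2 + m3 ∧
    s 2 + s 4 + s 7 ≤ m2 + m3 ∧
    s 4 + s 6 + s 7 ≤ m2 + m3 ∧
    s 5 + s 6 + s 8 ≤ m1 + m2 ∧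
    s 6 ≤ m2 ∧
    s 7 ≤ m3 ∧
    s 8 ≤ m1 ∧
    s 2 + s 3 + s 4 + s 5 + s 6 + s 7 + s 8 ≤ m1 + 2 * m2 + m3 ∧
    s 0 + s 1 + s 2 + s 3 + s 4 + s 6 + s 8 ≤ m1 + 2 * m2 + m3 ∧
    s 0 + s 2 + s 3 + s 4 + s 5 + s 6 + s 8 ≤ m1 + 2 * m2 + m3 ∧
    s 1 + s 2 + s 3 + s 4 + s 6 + s 7 + s 8 ≤ m1 + 2 * m2 + m3 ∧
    s 0 + s 1 + s 2 + s 3 + s 4 + s 5 + s 6 + 2 * s 8 ≤ 2 * m1 + 2 * m2 + m3 ∧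
    s 1 + s 2 + s 3 + s 4 + s 5 + s 6 + s 7 + 2 * s 8 ≤ 2 * m1 + 2 * m2 + m3 ∧
    s 0 + s 1 + 2 * (s 2 + s 3 + s 4) + s 5 + s 6 + s 7 + 2 * s 8 ≤ 2 * m1 + 3 * m2 + 2 * m3 ∧
    s 1 + 2 * (s 2 + s 3 + s 4) + s 5 + s 6 + 2 * (s 7 + s 8) ≤ 2 * m1 + 3 * m2 + 2 * m3 ∧
    s 2 + s 3 + 2 * s 4 + s 5 + s 6 + 2 * s 7 + s 8 ≤ m1 + 2 * m2 + 2 * m3}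

/-!
The point `e₉` turns every inequality of `S(ω₁)` into an equality, so it can be subtracted from any
point with `s₉ > 0`; after that a point of `S(λ + ω₁)` has to lose only a point with coordinates in
`s₁, s₂, s₄, s₆`, chosen according to whether inequality (2) is tight. This reduces the claim to
`m1 = 0`, and a similar choice reduces it to `m1 = m3 = 0`. The remaining inequalities all bound sums
over intervals of consecutive coordinates by multiples of `m2`, and a sequence with such bounds can
be divided in the ratio `m : n` by rounding its partial sums.
-/

theorem mul_div_le_mul_div_add {m n p q c : ℕ} (h : q ≤ p + c * (m + n)) :
    m * q / (m + n) ≤ m * p / (m + n) + c * m := by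
  rcases (m + n).eq_zero_or_pos with h0 | hpos
  · simp [h0]
  calc m * q / (m + n) ≤ m * (p + c * (m + n)) / (m + n) := by gcongr
    _ = (m * p + c * m * (m + n)) / (m + n) := by ring_nf
    _ = m * p / (m + n) + c * m := Nat.add_mul_div_right _ _ hpos

-- The complement `p - ⌊m * p / (m + n)⌋` is `⌈n * p / (m + n)⌉`, which is again monotone in `p`.
theorem add_mul_div_le_add_mul_div_add {m n p q c : ℕ} (h : q ≤ p + c * (m + n)) :
    q + m * p / (m + n) ≤ p + m * q / (m + n) + c * n := by
  rcases (m + n).eq_zero_or_pos with h0 | hpos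
  · have hle : q ≤ p := by simpa [h0] using h
    simpa [h0] using hle.trans le_self_add
  have hp : (m + n) * (m * p / (m + n)) ≤ m * p := Nat.mul_div_le _ _
  have hq : m * q < (m + n) * (m * q / (m + n) + 1) := Nat.lt_mul_div_succ _ hpos
  have hn : n * q ≤ n * (p + c * (m + n)) := by gcongr
  refine Nat.le_of_lt_succ (Nat.lt_of_mul_lt_mul_left (a := m + n) ?_)
  linarith

theorem add_sum_Ico_of_forall_add_eq {M : Type*} [AddCommMonoid M] {f s : ℕ → M}
    (h : ∀ k, f k + s k = f (k + 1)) {i j : ℕ} (hij : i ≤ j) :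
    f i + ∑ k ∈ Finset.Ico i j, s k = f j := by
  induction j, hij using Nat.le_induction with
  | base => simp
  | succ j hij ih => rw [Finset.sum_Ico_succ_top hij, ← add_assoc, ih, h]

theorem exists_add_eq_forall_sum_Ico_le (s : ℕ → ℕ) (m n : ℕ) :
    ∃ t u : ℕ → ℕ, t + u = s ∧ ∀ i j c, ∑ k ∈ Finset.Ico i j, s k ≤ c * (m + n) →
      ∑ k ∈ Finset.Ico i j, t k ≤ c * m ∧ ∑ k ∈ Finset.Ico i j, u k ≤ c * n := by
  let p (k : ℕ) : ℕ := ∑ l ∈ Finset.range k, s l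
  let q (k : ℕ) : ℕ := m * p k / (m + n)
  have hp (k : ℕ) : p k + s k = p (k + 1) := (Finset.sum_range_succ s k).symm
  have hq (k : ℕ) : q k ≤ q (k + 1) :=
    Nat.div_le_div_right (Nat.mul_le_mul_left m (hp k ▸ le_self_add))
  have hqs (k : ℕ) : q (k + 1) ≤ q k + s k := by
    have hceil : p k + q (k + 1) ≤ p (k + 1) + q k + 0 * n :=
      add_mul_div_le_add_mul_div_add (by linarith [hp k])
    linarith [hp k]
  let t (k : ℕ) : ℕ := q (k + 1) - q k
  have ht (k : ℕ) : q k + t k = q (k + 1) := Nat.add_sub_cancel' (hq k)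
  have hts : t + (s - t) = s := add_tsub_cancel_of_le fun k => Nat.sub_le_iff_le_add'.2 (hqs k)
  refine ⟨t, s - t, hts, fun i j c hc => ?_⟩
  rcases le_total j i with hji | hij
  · simp [Finset.Ico_eq_empty_of_le hji]
  have hpij := add_sum_Ico_of_forall_add_eq hp hij
  have hqij := add_sum_Ico_of_forall_add_eq ht hij
  have hsum : ∑ k ∈ Finset.Ico i j, t k + ∑ k ∈ Finset.Ico i j, (s - t) k =
      ∑ k ∈ Finset.Ico i j, s k := by
    rw [← Finset.sum_add_distrib]
    exact Finset.sum_congr rfl fun k _ => congrFun hts k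
  have hpc : p j ≤ p i + c * (m + n) := by omega
  have hfloor : q j ≤ q i + c * m := mul_div_le_mul_div_add hpc
  have hceil : p j + q i ≤ p i + q j + c * n := add_mul_div_le_add_mul_div_add hpc
  omega

theorem mem_add_of_le_of_tsub_mem {α : Type*} [AddCommMonoid α] [PartialOrder α]
    [CanonicallyOrderedAdd α] [Sub α] [OrderedSub α] {A B : Set α} {s t : α}
    (hle : t ≤ s) (ht : t ∈ A) (hst : s - t ∈ B) : s ∈ A + B :=
  ⟨t, ht, s - t, hst, add_tsub_cancel_of_le hle⟩

theorem mem_add_of_single_mem {ι : Type*} [DecidableEq ι] {A B : Set (ι → ℕ)} {s : ι → ℕ} {i : ι}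
    (hpos : 0 < s i) (hi : Pi.single i 1 ∈ A) (hs : s - Pi.single i 1 ∈ B) : s ∈ A + B :=
  mem_add_of_le_of_tsub_mem (update_le_iff.2 ⟨hpos, fun _ _ => zero_le⟩) hi hs

theorem SB3_add_SB3_subset (m1 m2 m3 m1' m2' m3' : ℕ) :
    SB3 m1 m2 m3 + SB3 m1' m2' m3' ⊆ SB3 (m1 + m1') (m2 + m2') (m3 + m3') := by
  rintro _ ⟨s, hs, t, ht, rfl⟩
  simp only [SB3, Set.mem_ofPred_eq, Pi.add_apply] at hs ht ⊢
  omega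

theorem mem_SB3_zero_iff {m2 m3 : ℕ} {s : Fin 9 → ℕ} (h7 : s 7 = 0) :
    s ∈ SB3 0 m2 m3 ↔ s 8 = 0 ∧ s 1 + s 2 + s 3 ≤ m2 + m3 ∧ s 2 + s 3 + s 4 ≤ m2 + m3 ∧
      s 3 + s 4 + s 5 ≤ m2 + m3 ∧ s 4 + s 5 + s 6 ≤ m2 + m3 ∧ s 5 + s 6 ≤ m2 ∧
      s 0 + s 1 + s 2 + s 3 + s 4 + s 5 + s 6 ≤ 2 * m2 + m3 := by
  simp only [SB3, Set.mem_ofPred_eq]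
  omega

/-- The inequalities cutting out `S(n·ω₂)`: a triple `(i, j, c)` stands for the bound `c * n` on the
sum of the coordinates with (zero-based) index in `[i, j)`. -/
def omegaTwoBounds : List (ℕ × ℕ × ℕ) :=
  [(7, 9, 0), (1, 4, 1), (2, 5, 1), (3, 6, 1), (4, 7, 1), (0, 7, 2)]

theorem mem_SB3_zero_zero_iff {n : ℕ} {s : ℕ → ℕ} :
    (fun i : Fin 9 => s i) ∈ SB3 0 n 0 ↔
      ∀ x ∈ omegaTwoBounds, ∑ k ∈ Finset.Ico x.1 x.2.1, s k ≤ x.2.2 * n := by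
  simp only [SB3, omegaTwoBounds, Set.mem_ofPred_eq, List.forall_mem_cons, List.not_mem_nil,
    Finset.sum_Ico_eq_sum_range, Finset.sum_range_succ, Finset.sum_range_zero, Nat.reduceSub,
    Nat.reduceAdd, Fin.coe_ofNat_eq_mod, Nat.reduceMod, IsEmpty.forall_iff, implies_true, and_true]
  omega

theorem SB3_zero_add_zero (m n : ℕ) : SB3 0 (m + n) 0 = SB3 0 m 0 + SB3 0 n 0 := by
  refine Set.Subset.antisymm (fun s hs => ?_) (SB3_add_SB3_subset 0 m 0 0 n 0)
  obtain ⟨s, rfl⟩ : ∃ s' : ℕ → ℕ, (fun i : Fin 9 => s' i) = s :=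
    ⟨fun k => s (Fin.ofNat 9 k), by simp⟩
  obtain ⟨t, u, rfl, hle⟩ := exists_add_eq_forall_sum_Ico_le s m n
  rw [mem_SB3_zero_zero_iff] at hs
  exact ⟨_, mem_SB3_zero_zero_iff.2 fun x hx => (hle _ _ _ (hs x hx)).1,
    _, mem_SB3_zero_zero_iff.2 fun x hx => (hle _ _ _ (hs x hx)).2, rfl⟩

theorem SB3_succ_left_subset (m1 m2 m3 : ℕ) :
    SB3 (m1 + 1) m2 m3 ⊆ SB3 1 0 0 + SB3 m1 m2 m3 := by
  intro s hs
  simp only [SB3, Set.mem_ofPred_eq] at hs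
  rcases Nat.eq_zero_or_pos (s 8) with h8 | h8
  · by_cases htight : s 2 + s 3 + s 4 + s 7 = m1 + 1 + m2 + m3
    · have h3 : 0 < s 3 := by omega
      have h4567 : s 4 + s 5 + s 6 + s 7 ≤ m1 + m2 + m3 := by omega
      have h56 : s 5 + s 6 ≤ m1 + m2 := by omega
      refine mem_add_of_single_mem h3 (by simp [SB3]) ?_
      simp only [SB3, Set.mem_ofPred_eq, Pi.sub_apply, Pi.single_apply, Fin.reduceEq, if_true,
        if_false, tsub_zero]
      omega
    · -- `e₂ + e₆` attains every bound except (2). If `s₂` or `s₆` vanishes, then (13) or (12)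
      -- leaves slack in (15), and `e₁` is subtracted only if both vanish.
      have htotal : s 1 = 0 ∨ s 5 = 0 →
          s 0 + s 1 + s 2 + s 3 + s 4 + s 5 + s 6 ≤ m1 + 1 + 2 * m2 + m3 := by omega
      apply mem_add_of_le_of_tsub_mem
        (t := ![min (s 0) (1 - s 1 - s 5), min (s 1) 1, 0, 0, 0, min (s 5) 1, 0, 0, 0])
      · simp [Pi.le_def, Fin.forall_fin_succ]
      all_goals
        simp only [SB3, Set.mem_ofPred_eq, Pi.sub_apply, Matrix.cons_val]
        omega
  · refine mem_add_of_single_mem h8 (by simp [SB3]) ?_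
    simp only [SB3, Set.mem_ofPred_eq, Pi.sub_apply, Pi.single_apply, Fin.reduceEq, if_true,
      if_false, tsub_zero]
    omega

-- The bound on the total prevents those on `s 1 + s 2 + s 3` and `s 4 + s 5 + s 6` from being
-- tight together. If the first is tight, the largest `i ≤ 3` with `0 < s i` lies in every tight
-- interval; if not, so does the larger of `4` and `3` with `0 < s i`, and if `s 4 = s 3 = 0` then
-- only the total can be tight, with `0 < s 0`.
theorem mem_or_exists_sub_single_mem_SB3_zero {m2 m3 : ℕ} {s : Fin 9 → ℕ}
    (hs : s ∈ SB3 0 m2 (m3 + 1)) (h7 : s 7 = 0) :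
    s ∈ SB3 0 m2 m3 ∨ ∃ i ≤ 4, 0 < s i ∧ s - Pi.single i 1 ∈ SB3 0 m2 m3 := by
  have hface (i : Fin 9) : (s - Pi.single i 1 : Fin 9 → ℕ) 7 = 0 := by simp [h7]
  obtain ⟨h8, h123, h234, h345, h456, h56, htotal⟩ := (mem_SB3_zero_iff h7).1 hs
  simp only [mem_SB3_zero_iff h7, mem_SB3_zero_iff (hface _), Pi.sub_apply, Pi.single_apply]
  by_cases htight : s 1 + s 2 + s 3 = m2 + (m3 + 1)
  · have h456_slack : s 4 + s 5 + s 6 ≤ m2 + m3 := by omega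
    right
    rcases Nat.eq_zero_or_pos (s 3) with h3 | h3
    · rcases Nat.eq_zero_or_pos (s 2) with h2 | h2
      · exact ⟨1, by decide, by omega, by grind⟩
      · exact ⟨2, by decide, h2, by grind⟩
    · exact ⟨3, by decide, h3, by grind⟩
  · rcases Nat.eq_zero_or_pos (s 4) with h4 | h4
    · have h456_slack : s 4 + s 5 + s 6 ≤ m2 + m3 := by omega
      rcases Nat.eq_zero_or_pos (s 3) with h3 | h3
      · rcases Nat.eq_zero_or_pos (s 0) with h0 | h0
        · left
          omega
        · exact .inr ⟨0, by decide, h0, by grind⟩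
      · exact .inr ⟨3, by decide, h3, by grind⟩
    · exact .inr ⟨4, by decide, h4, by grind⟩

theorem SB3_zero_succ_right_subset (m2 m3 : ℕ) :
    SB3 0 m2 (m3 + 1) ⊆ SB3 0 0 1 + SB3 0 m2 m3 := by
  intro s hs
  rcases Nat.eq_zero_or_pos (s 7) with h7 | h7
  · rcases mem_or_exists_sub_single_mem_SB3_zero hs h7 with hs' | ⟨i, hi, hpos, hs'⟩
    · exact mem_add_of_le_of_tsub_mem zero_le (by simp [SB3]) (by simpa using hs')
    · refine mem_add_of_single_mem hpos ?_ hs'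
      fin_cases i <;> simp [SB3] at hi ⊢
  · -- `e₁ + e₈` attains every bound of `S(ω₃)`; the bounds that `e₈` alone misses are
    -- (12), (13), (15), (17), which for `s₁ = 0` are slack by (14), (11), (16), (18).
    simp only [SB3, Set.mem_ofPred_eq] at hs
    apply mem_add_of_le_of_tsub_mem (t := ![min (s 0) 1, 0, 0, 0, 0, 0, 0, 1, 0])
    · simpa [Pi.le_def, Fin.forall_fin_succ] using Nat.one_le_iff_ne_zero.2 h7.ne'
    all_goals
      simp only [SB3, Set.mem_ofPred_eq, Pi.sub_apply, Matrix.cons_val]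
      omega

theorem SB3_eq_nsmul_add (m1 m2 m3 : ℕ) :
    SB3 m1 m2 m3 = m1 • SB3 1 0 0 + m3 • SB3 0 0 1 + SB3 0 m2 0 := by
  induction m1 with
  | zero =>
    induction m3 with
    | zero => simp
    | succ m3 ih =>
      rw [(SB3_zero_succ_right_subset m2 m3).antisymm
        (by simpa [add_comm] using SB3_add_SB3_subset 0 0 1 0 m2 m3), ih, succ_nsmul']
      simp only [zero_nsmul, zero_add, add_assoc]
  | succ m1 ih =>
    rw [(SB3_succ_left_subset m1 m2 m3).antisymm
      (by simpa [add_comm] using SB3_add_SB3_subset 1 0 0 m1 m2 m3), ih, succ_nsmul']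
    simp only [add_assoc]

/-- Minkowski-sum property of the `B₃` polytopes:
`S(λ+μ) = S(λ) + S(μ)` for all dominant integral weights `λ, μ`. -/
theorem SB3_add (m1 m2 m3 m1' m2' m3' : ℕ) :
    SB3 (m1 + m1') (m2 + m2') (m3 + m3') = SB3 m1 m2 m3 + SB3 m1' m2' m3' := by
  rw [SB3_eq_nsmul_add (m1 + m1'), SB3_eq_nsmul_add m1, SB3_eq_nsmul_add m1', SB3_zero_add_zero,
    add_nsmul, add_nsmul]
  ac_rfl
end

section
/- For all nonnegative integers m1,m2,m3, the finite set S(m1,m2,m3) has cardinality (1/720)*(m1+1)*(m2+1)*(m3+1)*(m1+2*m2+m3+4)*(2*m1+2*m2+m3+5)*(m1+m2+m3+3)*(m1+m2+2)*(m2+m3+2)*(2*m2+m3+3); this number is the Weyl dimension of the irreducible highest weight module V(m1*omega1+m2*omega2+m3*omega3) for the simple Lie algebra of type B3. -/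
open scoped Pointwise

/-! The set `SB3 m1 m2 m3` is parametrised bijectively by ten integers
`a, b, i, s, L, v, d, y, r, p`, each running over an interval whose ends depend on the preceding
ones, so its cardinality is an iterated sum. A parameter enters the sums over `r`, `y`, `d` and `v`
only directly and through a minimum `min c x` whose bound `c` also determines the range
`x ≤ c + n`; such a sum obeys one-step recursions in `c` and `n`, which a proposed closed form only
has to satisfy.

The outer sums over `s`, `i`, `b` and `a` telescope once the range of `p` is allowed to be longer by
`h - 1`. For instance, the parameters with `b = m3` are all those for `(m1, m2, m3)` except those
with `b < m3`, which are the parameters for `(m1, m2, m3 - 1)` with one more value of `p`. The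
closed forms of the outer sums are therefore successive differences of Weyl's polynomial. -/

namespace SB3

open Finset

theorem sum_range_min_eq {M : Type*} [AddCommMonoid M] {f T : ℕ → ℕ → M}
    (zero : T 0 0 = f 0 0) (diag : ∀ c, T (c + 1) 0 = T c 0 + f (c + 1) (c + 1))
    (step : ∀ c n, T c (n + 1) = T c n + f (c + n + 1) c) (c n : ℕ) :
    ∑ x ∈ range (c + n + 1), f x (min c x) = T c n := by
  induction n with
  | zero =>
    have h_diag : ∑ x ∈ range (c + 1), f x (min c x) = ∑ x ∈ range (c + 1), f x x :=
      sum_congr rfl fun x hx => by rw [min_eq_right (mem_range_succ_iff.1 hx)]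
    rw [add_zero, h_diag]
    clear h_diag
    induction c with
    | zero => rw [sum_range_one, zero]
    | succ c ih => rw [sum_range_succ, ih, diag]
  | succ n ih =>
    rw [← add_assoc, sum_range_succ, ih, step, min_eq_left (by omega)]

theorem sum_range_sub_pred {R G : Type*} [Ring R] [AddCommGroup G] (F : R → G)
    (hF : F (-1) = 0) (n : ℕ) : ∑ x ∈ range (n + 1), (F x - F (x - 1)) = F n := by
  induction n with
  | zero => simp [hF]
  | succ n ih => rw [sum_range_succ, ih, Nat.cast_succ, add_sub_cancel_right, add_sub_cancel]

/-- Tuples `(a, b, i, s, L, v, d, y, r, p)` of parameters for a lattice point. -/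
abbrev Param : Type := Σ _ _ _ _ _ _ _ _ _ : ℕ, ℕ

/-- The parameters of the points of `SB3 m1 m2 m3`. In the notation of `point`, the difference
`s 1 - d` is encoded by `m2 - i - L` and `r`, its positive and negative parts: this is why `r` may
be nonzero only for the largest value of `L`. -/
def paramFinset (m1 m2 m3 : ℕ) : Finset Param :=
  (range (m1 + 1)).sigma fun a =>
  (range (m3 + 1)).sigma fun b =>
  (range (m2 + 1)).sigma fun i =>
  (range (i + b + 1)).sigma fun s =>
  (range (m2 - i + 1)).sigma fun L =>
  (range (L + s + 1)).sigma fun v =>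
  (range (a + v + 1)).sigma fun d =>
  (range (min a d + min L v + 1)).sigma fun y =>
  (range ((if L = m2 - i then d else 0) + 1)).sigma fun r =>
  range (m3 - b + i + min (d - min (min a d) y) r + 1)

/-- The point of `SB3 m1 m2 m3` with the given parameters. The differences `y - d` and
`y - min a d` stand for positive parts; no other subtraction is truncated on `paramFinset`. -/
def point (m1 m2 m3 : ℕ) : Param → Fin 9 → ℕ :=
  fun ⟨a, b, i, s, L, v, d, y, r, p⟩ =>
    ![p, d - r + (m2 - i - L), L + s - v + (y - d), a + v - max d y, m2 - L + b - s, y,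
      L - (y - min a d), m3 - b, m1 - a]

theorem point_mem {m1 m2 m3 : ℕ} {z : Param} (hz : z ∈ paramFinset m1 m2 m3) :
    point m1 m2 m3 z ∈ SB3 m1 m2 m3 := by
  obtain ⟨a, b, i, s, L, v, d, y, r, p⟩ := z
  simp only [paramFinset, mem_sigma, mem_range, Nat.lt_succ_iff] at hz
  obtain ⟨ha, hb, hi, hs, hL, hv, hd, hy, hr, hp⟩ := hz
  replace hr : r ≤ d := by split_ifs at hr <;> omega
  obtain ⟨D, hD⟩ : ∃ D, D = max d y := ⟨_, rfl⟩
  obtain ⟨q, hq⟩ : ∃ q, q = min a d := ⟨_, rfl⟩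
  obtain ⟨E, hE⟩ : ∃ E, E = max q y := ⟨_, rfl⟩
  have hdD : d ≤ D ∧ y ≤ D ∧ D ≤ a + v ∧ D + q ≤ d + E := by omega
  have hqE : q ≤ a ∧ q ≤ d ∧ q ≤ E ∧ y ≤ E ∧ E ≤ q + L ∧ E ≤ q + v := by omega
  have hpr : p ≤ m3 - b + i + r ∧ p + q + y ≤ m3 - b + i + d + E := by omega
  simp only [SB3, point, Set.mem_ofPred_eq, Fin.isValue, Matrix.cons_val]
  generalize hs1 : d - r + (m2 - i - L) = s1
  generalize hs2 : L + s - v + (y - d) = s2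
  generalize hs3 : a + v - max d y = s3
  generalize hs4 : m2 - L + b - s = s4
  generalize hs6 : L - (y - min a d) = s6
  generalize hs7 : m3 - b = s7 at hpr ⊢
  generalize hs8 : m1 - a = s8
  replace hs1 : s1 + r + i + L = d + m2 := by omega
  replace hs2 : s2 + v + d = L + s + D := by omega
  replace hs3 : s3 + D = a + v := by omega
  replace hs4 : s4 + s + L = m2 + b := by omega
  replace hs6 : s6 + E = L + q := by omega
  replace hs7 : s7 + b = m3 := by omega
  replace hs8 : s8 + a = m1 := by omega
  replace hL : i + L ≤ m2 := by omega
  clear hD hq hE hp hy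
  refine ⟨?_, ?_, ?_, ?_, ?_, ?_, ?_, ?_, ?_, ?_, ?_, ?_, ?_, ?_, ?_, ?_, ?_, ?_, ?_⟩ <;> omega

theorem point_injOn (m1 m2 m3 : ℕ) :
    Set.InjOn (point m1 m2 m3) (paramFinset m1 m2 m3) := by
  rintro ⟨a, b, i, s, L, v, d, y, r, p⟩ hz ⟨a', b', i', s', L', v', d', y', r', p'⟩ hz' h
  simp only [mem_coe, paramFinset, mem_sigma, mem_range] at hz hz'
  obtain ⟨ha, hb, hi, hs, hL, hv, hd, hy, hr, -⟩ := hz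
  obtain ⟨ha', hb', hi', hs', hL', hv', hd', hy', hr', -⟩ := hz'
  have hsum : L + s - v + (y - d) + (a + v - max d y) + (m2 - L + b - s) + d = a + m2 + b := by
    clear * - hi hs hL hv hd hy; omega
  have hsum' : L' + s' - v' + (y' - d') + (a' + v' - max d' y') + (m2 - L' + b' - s') + d' =
      a' + m2 + b' := by
    clear * - hi' hs' hL' hv' hd' hy'; omega
  simp only [point, Matrix.vecCons_inj] at h
  obtain ⟨rfl, h1, h2, h3, h4, rfl, h6, h7, h8, -⟩ := h
  obtain rfl : a = a' := by clear * - ha ha' h8; omega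
  obtain rfl : b = b' := by clear * - hb hb' h7; omega
  obtain rfl : d = d' := by
    rw [h2, h3, h4] at hsum
    clear * - hsum hsum'; omega
  obtain rfl : L = L' := by clear * - hL hL' hy hy' h6; omega
  obtain rfl : s = s' := by clear * - hi hi' hs hs' hL hL' h4; omega
  obtain rfl : v = v' := by clear * - hv hv' h2; omega
  obtain ⟨rfl, rfl⟩ : i = i' ∧ r = r' := by
    clear * - hi hi' hL hL' hr hr' h1
    split_ifs at hr hr' <;> omega
  rfl

theorem exists_point_eq {m1 m2 m3 : ℕ} {x : Fin 9 → ℕ} (hx : x ∈ SB3 m1 m2 m3) :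
    ∃ z ∈ paramFinset m1 m2 m3, point m1 m2 m3 z = x := by
  obtain ⟨h1, h2, h3, h4, h5, h6, h7, h8, h9, h10, h11, h12, h13, h14, h15, h16, h17, h18,
    h19⟩ := hx
  obtain ⟨a, ha⟩ : ∃ a, x 8 + a = m1 := ⟨m1 - x 8, by omega⟩
  obtain ⟨b, hb⟩ : ∃ b, x 7 + b = m3 := ⟨m3 - x 7, by omega⟩
  obtain ⟨d, hd⟩ : ∃ d, x 2 + x 3 + x 4 + d = a + m2 + b :=
    ⟨a + m2 + b - (x 2 + x 3 + x 4), by omega⟩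
  obtain ⟨L, hL⟩ : ∃ L, L = x 6 + (x 5 - min a d) := ⟨_, rfl⟩
  obtain ⟨i, hi⟩ : ∃ i, i + L + (x 1 - d) = m2 := ⟨m2 - L - (x 1 - d), by omega⟩
  obtain ⟨s, hs⟩ : ∃ s, s + L + x 4 = m2 + b := ⟨m2 + b - x 4 - L, by omega⟩
  obtain ⟨v, hv⟩ : ∃ v, v + (x 2 - (x 5 - d)) = L + s := ⟨L + s - (x 2 - (x 5 - d)), by omega⟩
  refine ⟨⟨a, b, i, s, L, v, d, x 5, d - x 1, x 0⟩, ?_, ?_⟩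
  · have hr : d - x 1 < (if L = m2 - i then d else 0) + 1 := by split_ifs <;> omega
    simp only [paramFinset, mem_sigma, mem_range]
    rcases le_total a d with h | h <;> simp only [min_eq_left h, min_eq_right h] at * <;>
    refine ⟨?_, ?_, ?_, ?_, ?_, ?_, ?_, ?_, hr, ?_⟩ <;> omega
  · funext j
    fin_cases j <;> simp only [point, Fin.isValue, Matrix.cons_val, Fin.mk_one, Fin.zero_eta,
      Fin.reduceFinMk] <;> omega

theorem ncard_eq_card_paramFinset (m1 m2 m3 : ℕ) :
    (SB3 m1 m2 m3).ncard = (paramFinset m1 m2 m3).card := by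
  have h_image : SB3 m1 m2 m3 = point m1 m2 m3 '' (paramFinset m1 m2 m3) := by
    ext x
    exact ⟨exists_point_eq, fun ⟨_, hz, hx⟩ => hx ▸ point_mem hz⟩
  rw [h_image, (point_injOn m1 m2 m3).ncard_image, Set.ncard_coe_finset]

/-- Weyl's polynomial for the dimension of `V(m1·ω₁ + m2·ω₂ + m3·ω₃)`, with arbitrary rational
arguments so that it can be differenced. -/
def weylDim (m1 m2 m3 : ℚ) : ℚ :=
  (m1 + 1) * (m2 + 1) * (m3 + 1) * (m1 + 2 * m2 + m3 + 4) * (2 * m1 + 2 * m2 + m3 + 5) *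
    (m1 + m2 + m3 + 3) * (m1 + m2 + 2) * (m2 + m3 + 2) * (2 * m2 + m3 + 3) / 720

/-- The number of parameters without `p`, namely of `(b, i, s, L, v, d, y, r)`, over a given `a`
when `(m2, m3) = (n, m)`. It is the increase of `aFiber` for each further value of `p`. -/
def aFiberSlope (a n m : ℚ) : ℚ :=
  let P := n + m + 2
  let Q := n + 1
  let Z := 2 * a + 2 * n + m + 4
  P * Q * (P - Q) * (10 * (P + Q) * Z ^ 3 - 15 * (P ^ 2 + P * Q + Q ^ 2 - 1) * Z ^ 2 +
    (P + Q) * (6 * P ^ 2 + 6 * Q ^ 2 - 10) * Z -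
    (P ^ 4 + P ^ 3 * Q - 4 * P ^ 2 * Q ^ 2 + P * Q ^ 3 + Q ^ 4) + 5 * P * Q + 1) / 1440

/-- The number of parameters over a given `a` when `(m2, m3) = (n, m)` and `p` has `h - 1` more
values than in `paramFinset`. -/
def aFiber (a n m h : ℚ) : ℚ :=
  weylDim a n m - weylDim (a - 1) n m + (h - 1) * aFiberSlope a n m

/-- The number of parameters over given `(a, b)` with `b = m`, when `m2 = n` and `p` has
`h + i + min (d - min (min a d) y) r` values. -/
def bFiber (a n m h : ℚ) : ℚ := aFiber a n m h - aFiber a n (m - 1) (h + 1)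

/-- The number of parameters over given `(a, b, i)`, when `m2 - i = n`, `i + b = u` and `p` has
`h + min (d - min (min a d) y) r` values. -/
def iFiber (a n u h : ℚ) : ℚ := bFiber a n u h - bFiber a (n - 1) (u + 1) (h + 1)

/-- The number of parameters over given `(a, b, i, s)`, with `n` and `h` as in `iFiber`. -/
def sFiber (a n s h : ℚ) : ℚ := iFiber a n s h - iFiber a n (s - 1) h

/-- The number of `(d, y, r, p)` over given `(a, b, i, s, L, v)` with `L = m2 - i`, where
`ν = min L v` and `h` is as in `iFiber`. -/
def vFiber (a v ν h : ℚ) : ℚ :=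
  let V := a + 1 + v
  let N := a + 1 + ν
  (2 * N * V * (V + 1) * (3 * h + V - 1) - a * (a + 1) *
    (2 * (3 * N - 2 * a - 1) * V - (4 * a + 2) * N + 2 * (a + 2) * h + 3 * a * (a + 1))) / 12

/-- The number of `(y, r, p)` over given `(a, b, i, s, L, v, d)` with `L = m2 - i`, where
`q = min a d`, `ν = min L v` and `h` is as in `iFiber`. -/
def dFiber (d q ν h : ℚ) : ℚ :=
  (q + ν + 1) * (d + 1) * (2 * h + d) / 2 - q * (q + 1) * (q + 3 * ν + 2) / 6

/-- The number of `(d, y)` over given `(a, b, i, s, L, v)`, where `ν = min L v`. -/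
def pairCount (a v ν : ℚ) : ℚ := (a + 1 + v) * (a + 1 + ν) - a * (a + 1) / 2

/-- The number of `(L, v, d, y)` with `L < M` over given `(a, b, i, s)`. -/
def quadCount (a M s : ℚ) : ℚ :=
  M * (M + a + s + 1) * (M ^ 2 + 3 * M * (a + s + 1) + 6 * a * s + 3 * a + 3 * s + 2) / 12

theorem sum_add_min (h : ℚ) (k c : ℕ) :
    ∑ r ∈ range (k + c + 1), (h + (min k r : ℕ)) = (k + c + 1) * h + k * (k + 2 * c + 1) / 2 := by
  refine sum_range_min_eq (f := fun _ k => h + k)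
    (T := fun k c => (k + c + 1) * h + k * (k + 2 * c + 1) / 2) ?_ (fun c => ?_) (fun c n => ?_)
    k c <;>
  · push_cast; ring

theorem sum_add_min_sub_eq_dFiber (h : ℚ) (d q ν : ℕ) (hq : q ≤ d) :
    ∑ y ∈ range (q + ν + 1), ∑ r ∈ range (d + 1), (h + (min (d - min q y) r : ℕ)) =
      dFiber d q ν h := by
  have sum_r (y : ℕ) : ∑ r ∈ range (d + 1), (h + (min (d - min q y) r : ℕ)) =
      (d + 1) * h + (d * (d + 1) - (min q y : ℕ) * ((min q y : ℕ) + 1)) / 2 := by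
    obtain ⟨k, hk⟩ : ∃ k, d = k + min q y := ⟨d - min q y, by omega⟩
    generalize min q y = c at hk ⊢
    rw [hk, Nat.add_sub_cancel, sum_add_min]
    push_cast
    ring
  simp only [sum_r]
  refine sum_range_min_eq (f := fun _ c => (d + 1) * h + (d * (d + 1) - c * (c + 1 : ℚ)) / 2)
    (T := fun q ν => dFiber d q ν h) ?_ (fun c => ?_) (fun c n => ?_) q ν <;>
  · simp only [dFiber]; push_cast; ring

theorem sum_dFiber (a v : ℕ) (ν h : ℚ) :
    ∑ d ∈ range (a + v + 1), dFiber d (min a d : ℕ) ν h = vFiber a v ν h := by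
  refine sum_range_min_eq (f := fun d q => dFiber d q ν h) (T := fun a v => vFiber a v ν h)
    ?_ (fun c => ?_) (fun c n => ?_) a v <;>
  · simp only [dFiber, vFiber]; push_cast; ring

theorem sum_vFiber (a h : ℚ) (L s : ℕ) :
    ∑ v ∈ range (L + s + 1), vFiber a v (min L v : ℕ) h =
      sFiber a L s h - h * quadCount a L s := by
  refine sum_range_min_eq (f := fun v ν => vFiber a v ν h)
    (T := fun L s => sFiber a L s h - h * quadCount a L s) ?_ (fun c => ?_) (fun c n => ?_) L s <;>
  · simp only [vFiber, quadCount, sFiber, iFiber, bFiber, aFiber, weylDim, aFiberSlope]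
    push_cast
    ring

theorem sum_min_add_eq_pairCount (a v : ℕ) (ν : ℚ) :
    ∑ d ∈ range (a + v + 1), ((min a d : ℕ) + ν + 1) = pairCount a v ν := by
  refine sum_range_min_eq (f := fun _ q => q + ν + 1) (T := fun a v => pairCount a v ν)
    ?_ (fun c => ?_) (fun c n => ?_) a v <;>
  · simp only [pairCount]; push_cast; ring

theorem sum_pairCount (a : ℚ) (L s : ℕ) :
    ∑ v ∈ range (L + s + 1), pairCount a v (min L v : ℕ) =
      quadCount a (L + 1 : ℕ) s - quadCount a L s := by
  refine sum_range_min_eq (f := fun v ν => pairCount a v ν)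
    (T := fun L s => quadCount a (L + 1 : ℕ) s - quadCount a L s) ?_ (fun c => ?_)
    (fun c n => ?_) L s <;>
  · simp only [pairCount, quadCount]; push_cast; ring

theorem sum_add_min_eq_sFiber (a M s : ℕ) (h : ℚ) :
    ∑ L ∈ range (M + 1), ∑ v ∈ range (L + s + 1), ∑ d ∈ range (a + v + 1),
      ∑ y ∈ range (min a d + min L v + 1), ∑ r ∈ range ((if L = M then d else 0) + 1),
        (h + (min (d - min (min a d) y) r : ℕ)) = sFiber a M s h := by
  have sum_lt : ∑ L ∈ range M, ∑ v ∈ range (L + s + 1), ∑ d ∈ range (a + v + 1),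
      ∑ y ∈ range (min a d + min L v + 1), ∑ r ∈ range ((if L = M then d else 0) + 1),
        (h + (min (d - min (min a d) y) r : ℕ)) = h * quadCount a M s := by
    have quadCount_zero : quadCount a (0 : ℕ) s = 0 := by simp [quadCount]
    rw [← sub_zero (quadCount a M s), ← quadCount_zero,
      ← sum_range_sub (fun L : ℕ => quadCount a L s), mul_sum]
    refine sum_congr rfl fun L hL => ?_
    rw [← sum_pairCount, mul_sum]
    refine sum_congr rfl fun v _ => ?_
    rw [← sum_min_add_eq_pairCount, mul_sum]
    refine sum_congr rfl fun d _ => ?_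
    simp [(mem_range.1 hL).ne, mul_comm h]
  rw [sum_range_succ, sum_lt]
  simp only [if_true, sum_add_min_sub_eq_dFiber _ _ _ _ (min_le_right _ _), sum_dFiber, sum_vFiber]
  exact add_sub_cancel _ _

theorem sum_sFiber (a n h : ℚ) (u : ℕ) :
    ∑ s ∈ range (u + 1), sFiber a n s h = iFiber a n u h :=
  sum_range_sub_pred (fun u => iFiber a n u h)
    (by simp only [iFiber, bFiber, aFiber, weylDim, aFiberSlope]; ring) u

theorem sum_iFiber (a b h : ℚ) (n : ℕ) :
    ∑ i ∈ range (n + 1), iFiber a (n - i) (i + b) (h + i) = bFiber a n b h := by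
  have h_tele := sum_range_sub' (fun i : ℕ => bFiber a (n - i) (i + b) (h + i)) (n + 1)
  have h_zero : bFiber a (n - (n + 1 : ℕ)) ((n + 1 : ℕ) + b) (h + (n + 1 : ℕ)) = 0 := by
    simp only [bFiber, aFiber, weylDim, aFiberSlope]
    push_cast
    ring
  rw [h_zero, sub_zero, Nat.cast_zero, sub_zero, zero_add, add_zero] at h_tele
  rw [← h_tele]
  refine sum_congr rfl fun i _ => ?_
  rw [iFiber]
  push_cast
  ring_nf

theorem sum_bFiber (a n : ℚ) (m : ℕ) :
    ∑ b ∈ range (m + 1), bFiber a n b (m - b + 1) = aFiber a n m 1 := by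
  have h_tele := sum_range_sub_pred (fun b : ℚ => aFiber a n b (m - b + 1))
    (by simp only [aFiber, weylDim, aFiberSlope]; ring) m
  rw [sub_self, zero_add] at h_tele
  rw [← h_tele]
  refine sum_congr rfl fun b _ => ?_
  rw [bFiber]
  ring_nf

theorem sum_aFiber (m1 : ℕ) (n m : ℚ) :
    ∑ a ∈ range (m1 + 1), aFiber a n m 1 = weylDim m1 n m := by
  simp only [aFiber, sub_self, zero_mul, add_zero]
  exact sum_range_sub_pred (fun a => weylDim a n m) (by simp only [weylDim]; ring) m1

theorem card_paramFinset (m1 m2 m3 : ℕ) :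
    ((paramFinset m1 m2 m3).card : ℚ) = weylDim m1 m2 m3 := by
  simp only [paramFinset, card_sigma, card_range, Nat.cast_sum]
  rw [← sum_aFiber]
  refine sum_congr rfl fun a _ => ?_
  rw [← sum_bFiber]
  refine sum_congr rfl fun b hb => ?_
  rw [← sum_iFiber]
  refine sum_congr rfl fun i hi => ?_
  rw [← Nat.cast_sub (mem_range_succ_iff.1 hb), ← Nat.cast_sub (mem_range_succ_iff.1 hi),
    ← Nat.cast_add i b, ← sum_sFiber]
  refine sum_congr rfl fun s _ => ?_
  rw [← sum_add_min_eq_sFiber]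
  push_cast
  simp only [add_right_comm]

end SB3

/-- the number of lattice points of `P(λ)` equals the Weyl dimension of
the irreducible `B₃`-module `V(m1·ω₁ + m2·ω₂ + m3·ω₃)`. -/
theorem SB3_card (m1 m2 m3 : ℕ) :
    720 * (SB3 m1 m2 m3).ncard =
      (m1 + 1) * (m2 + 1) * (m3 + 1) * (m1 + 2 * m2 + m3 + 4) *
        (2 * m1 + 2 * m2 + m3 + 5) * (m1 + m2 + m3 + 3) * (m1 + m2 + 2) *
        (m2 + m3 + 2) * (2 * m2 + m3 + 3) := by
  rw [← Nat.cast_inj (R := ℚ)]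
  push_cast
  rw [SB3.ncard_eq_card_paramFinset, SB3.card_paramFinset, SB3.weylDim]
  ring
end

section
/- Let n >= 2 and i = 1 (so that D consists of exactly the two chains {alpha_{1,1}, alpha_{1,2}, ..., alpha_{1,2n-2}} and {alpha_{1,2}, ..., alpha_{1,2n-1}}, and S(D, m*omega_1) = {s in Z_{>=0}^{2n-1} : s_{alpha_{1,1}}+...+s_{alpha_{1,2n-2}} <= m and s_{alpha_{1,2}}+...+s_{alpha_{1,2n-1}} <= m}). Then for every integer m >= 1, S(D, m*omega_1) = S(D, (m-1)*omega_1) + S(D, omega_1). -/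
open scoped Pointwise

/-- A single step in a Dyck path: `α_{p,q} → α_{p,q+1}` or `α_{p,q} → α_{p+1,q}`. -/
def RootStep (a b : ℕ × ℕ) : Prop :=
  (b.1 = a.1 ∧ b.2 = a.2 + 1) ∨ (b.1 = a.1 + 1 ∧ b.2 = a.2)

/-- `inR n i (p,q)` means that `α_{p,q}` is a positive root of `B_n`
(`1 ≤ p ≤ n`, `p ≤ q ≤ 2n-p`) belonging to `R_i^+`, i.e. `p ≤ i ≤ q`. -/
def inR (n i : ℕ) (a : ℕ × ℕ) : Prop :=
  1 ≤ a.1 ∧ a.1 ≤ i ∧ i ≤ a.2 ∧ a.1 + a.2 ≤ 2 * n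

/-- A type 1 Dyck path for `R_i^+` of `B_n`, recorded as the list of its roots. -/
def IsType1 (n i : ℕ) (L : List (ℕ × ℕ)) : Prop :=
  L ≠ [] ∧ L.Chain' RootStep ∧ (∀ x ∈ L, inR n i x) ∧
    ((L.head? = some (1, i) ∧ L.getLast? = some (i, 2 * n - i - 1)) ∨
     (L.head? = some (1, i + 1) ∧ L.getLast? = some (i, 2 * n - i)))

/-- A type 2 (double) Dyck path for `R_i^+` of `B_n`, recorded as the pair of lists of
roots of its two constituent single paths. -/
def IsType2 (n i : ℕ) (L1 L2 : List (ℕ × ℕ)) : Prop :=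
  ∃ j : ℕ, 1 ≤ j ∧ j < i ∧
    L1 ≠ [] ∧ L2 ≠ [] ∧ L1.Chain' RootStep ∧ L2.Chain' RootStep ∧
    (∀ x ∈ L1, inR n i x) ∧ (∀ x ∈ L2, inR n i x) ∧
    L1.head? = some (1, i) ∧ L2.head? = some (2, i) ∧
    L1.getLast? = some (j, 2 * n - j) ∧ L2.getLast? = some (j + 1, 2 * n - j - 1) ∧
    (∀ x, ¬(x ∈ L1 ∧ x ∈ L2))

/-- The constant `c_i`: `1` if `i = 1` or `i = n`, and `2` if `2 ≤ i ≤ n-1`. -/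
def cB (n i : ℕ) : ℕ := if i = 1 ∨ i = n then 1 else 2

/-- `SD n i m` is the set `S(D, m·ω_i)` of lattice points of the Dyck-path polytope:
multi-exponents `s` supported on `R_i^+` with `∑_{β ∈ p} s_β ≤ m` for every type 1
Dyck path `p` and `∑_{β ∈ p} s_β ≤ m·c_i` for every type 2 Dyck path `p`.
(Elements of a Dyck path are pairwise distinct, so summation over the recording
lists agrees with summation over the underlying set of roots.) -/
def SD (n i m : ℕ) : Set ((ℕ × ℕ) → ℕ) :=
  {s | (∀ β, ¬ inR n i β → s β = 0) ∧
       (∀ L, IsType1 n i L → (L.map s).sum ≤ m) ∧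
       (∀ L1 L2, IsType2 n i L1 L2 → ((L1 ++ L2).map s).sum ≤ m * cB n i)}

/-!
For `i = 1` every Dyck path is a run of consecutive roots of the row `p = 1`, so `S(D, m·ω₁)` is cut
out by bounds on interval sums. Let `m = k + l`, and think of a point `s` as a row of cells, with
`s q` unit tokens in cell `q`, all tokens numbered from left to right. Give the tokens whose number
has remainder less than `k` modulo `k + l` to `t`, and the others to `u`. An interval holding at
most `k + l` tokens meets each residue class at most once, so it contributes at most `k` to `t` and
at most `l` to `u`.
-/

open Finset

theorem sum_Ico_sum_Ico_succ_of_monotone {M : Type*} [AddCommMonoid M] {F : ℕ → ℕ}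
    (hF : Monotone F) (f : ℕ → M) (a b : ℕ) :
    ∑ q ∈ Ico a b, ∑ x ∈ Ico (F q) (F (q + 1)), f x = ∑ x ∈ Ico (F a) (F b), f x := by
  obtain hab | hba := le_total a b
  · induction b, hab using Nat.le_induction with
    | base => simp
    | succ b hab ih =>
      rw [sum_Ico_succ_top hab, ih, sum_Ico_consecutive f (hF hab) (hF b.le_succ)]
  · simp [hba, hF hba]

theorem card_filter_Ico_le_count_of_periodic {p : ℕ → Prop} [DecidablePred p] {N : ℕ}
    (hp : Function.Periodic p N) {x y : ℕ} (hxy : y ≤ x + N) :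
    #{z ∈ Ico x y | p z} ≤ N.count p :=
  calc #{z ∈ Ico x y | p z}
      ≤ #{z ∈ Ico x (x + N) | p z} := by gcongr
    _ = N.count p := Nat.filter_Ico_card_eq_of_periodic x N p hp

theorem count_mod_add_lt (k l : ℕ) : (k + l).count (fun x ↦ x % (k + l) < k) = k := by
  rw [Nat.count_eq_card_filter_range]
  have hfilter : {x ∈ range (k + l) | x % (k + l) < k} = range k := by
    ext x
    grind [Nat.mod_eq_of_lt]
  rw [hfilter, card_range]

theorem count_not_mod_add_lt (k l : ℕ) : (k + l).count (fun x ↦ ¬ x % (k + l) < k) = l := by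
  have h := card_filter_add_card_filter_not (s := range (k + l)) (fun x ↦ x % (k + l) < k)
  simp only [← Nat.count_eq_card_filter_range, count_mod_add_lt, card_range] at h
  exact Nat.add_left_cancel h

/-- The integer decomposition property of interval matrices (with constant right-hand side). -/
theorem exists_add_eq_forall_sum_Ico_le_s4 (s : ℕ → ℕ) (k l : ℕ) :
    ∃ t u : ℕ → ℕ, t + u = s ∧ ∀ a b, ∑ q ∈ Ico a b, s q ≤ k + l →
      ∑ q ∈ Ico a b, t q ≤ k ∧ ∑ q ∈ Ico a b, u q ≤ l := by
  let F (q : ℕ) : ℕ := ∑ j ∈ range q, s j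
  have hF : Monotone F := fun _ _ h ↦ sum_le_sum_of_subset (range_mono h)
  let color (x : ℕ) : Prop := x % (k + l) < k
  have hcolor : Function.Periodic color (k + l) := fun x ↦ by simp [color]
  have sum_card (p : ℕ → Prop) [DecidablePred p] (a b : ℕ) :
      ∑ q ∈ Ico a b, #{x ∈ Ico (F q) (F (q + 1)) | p x} = #{x ∈ Ico (F a) (F b) | p x} := by
    simp only [card_filter, sum_Ico_sum_Ico_succ_of_monotone hF]
  refine ⟨fun q ↦ #{x ∈ Ico (F q) (F (q + 1)) | color x},
    fun q ↦ #{x ∈ Ico (F q) (F (q + 1)) | ¬ color x}, ?_, fun a b hab ↦ ?_⟩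
  · ext q
    simp [card_filter_add_card_filter_not, F, sum_range_succ]
  · have hFab : F b ≤ F a + (k + l) := by
      obtain h | h := le_total a b
      · calc F b = F a + ∑ q ∈ Ico a b, s q := (sum_range_add_sum_Ico s h).symm
          _ ≤ F a + (k + l) := Nat.add_le_add_left hab _
      · exact (hF h).trans (Nat.le_add_right _ _)
    rw [sum_card, sum_card]
    exact ⟨(card_filter_Ico_le_count_of_periodic hcolor hFab).trans_eq (count_mod_add_lt k l),
      (card_filter_Ico_le_count_of_periodic (p := (¬ color ·)) (hcolor.comp Not) hFab).trans_eq
        (count_not_mod_add_lt k l)⟩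

theorem sum_map_cons_eq_sum_Ico_of_isChain_rootStep {M : Type*} [AddCommMonoid M]
    (s : ℕ × ℕ → M) {p a : ℕ} {L : List (ℕ × ℕ)} (hchain : ((p, a) :: L).IsChain RootStep)
    (hrow : ∀ x ∈ L, x.1 = p) :
    (((p, a) :: L).map s).sum = ∑ q ∈ Ico a (a + L.length + 1), s (p, q) := by
  induction L generalizing a with
  | nil => simp
  | cons y L ih =>
    obtain ⟨hstep, htail⟩ := List.isChain_cons_cons.1 hchain
    obtain ⟨hy, hrow'⟩ := List.forall_mem_cons.1 hrow
    obtain rfl : y = (p, a + 1) := by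
      rcases hstep with ⟨-, h⟩ | ⟨h, -⟩
      · exact Prod.ext hy h
      · simp_all
    have hend : a + (L.length + 1) + 1 = a + 1 + L.length + 1 := by omega
    have hlt : a < a + 1 + L.length + 1 := by omega
    rw [List.map_cons, List.sum_cons, ih htail hrow', List.length_cons, hend,
      sum_eq_sum_Ico_succ_bot hlt]

theorem exists_sum_map_eq_sum_Ico_of_isChain_rootStep {M : Type*} [AddCommMonoid M] {p : ℕ}
    {L : List (ℕ × ℕ)} (hchain : L.IsChain RootStep) (hrow : ∀ x ∈ L, x.1 = p) :
    ∃ a b, ∀ s : ℕ × ℕ → M, (L.map s).sum = ∑ q ∈ Ico a b, s (p, q) := by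
  match L with
  | [] => exact ⟨0, 0, by simp⟩
  | (p', a) :: L =>
    obtain ⟨rfl, hrow⟩ := List.forall_mem_cons.1 hrow
    exact ⟨a, _, fun s ↦ sum_map_cons_eq_sum_Ico_of_isChain_rootStep s hchain hrow⟩

theorem exists_add_eq_forall_isChain_rootStep_sum_le (s : ℕ × ℕ → ℕ) (k l : ℕ) :
    ∃ t u : ℕ × ℕ → ℕ, t + u = s ∧ ∀ (p : ℕ) (L : List (ℕ × ℕ)), L.IsChain RootStep →
      (∀ x ∈ L, x.1 = p) → (L.map s).sum ≤ k + l → (L.map t).sum ≤ k ∧ (L.map u).sum ≤ l := by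
  choose t u htu hle using fun p ↦ exists_add_eq_forall_sum_Ico_le_s4 (fun q ↦ s (p, q)) k l
  refine ⟨fun β ↦ t β.1 β.2, fun β ↦ u β.1 β.2, funext fun β ↦ congrFun (htu β.1) β.2,
    fun p L hchain hrow hL ↦ ?_⟩
  obtain ⟨a, b, hsum⟩ := exists_sum_map_eq_sum_Ico_of_isChain_rootStep (M := ℕ) hchain hrow
  simp only [hsum] at hL ⊢
  exact hle p a b hL

theorem inR.fst_eq_one {n : ℕ} {β : ℕ × ℕ} (h : inR n 1 β) : β.1 = 1 :=
  le_antisymm h.2.1 h.1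

theorem not_isType2_one (n : ℕ) (L₁ L₂ : List (ℕ × ℕ)) : ¬ IsType2 n 1 L₁ L₂ := by
  rintro ⟨j, hj, hj', -⟩
  omega

theorem mem_SD_one_iff {n m : ℕ} {s : ℕ × ℕ → ℕ} :
    s ∈ SD n 1 m ↔
      (∀ β, ¬ inR n 1 β → s β = 0) ∧ ∀ L, IsType1 n 1 L → (L.map s).sum ≤ m := by
  simp [SD, not_isType2_one]

theorem SD_add_subset (n i k l : ℕ) : SD n i k + SD n i l ⊆ SD n i (k + l) := by
  rintro _ ⟨t, ⟨ht₀, ht₁, ht₂⟩, u, ⟨hu₀, hu₁, hu₂⟩, rfl⟩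
  refine ⟨fun β hβ ↦ by simp [ht₀ β hβ, hu₀ β hβ], fun L hL ↦ ?_, fun L₁ L₂ hL ↦ ?_⟩
  · simpa only [Pi.add_def, List.sum_map_add] using add_le_add (ht₁ L hL) (hu₁ L hL)
  · simpa only [Pi.add_def, List.sum_map_add, add_mul] using
      add_le_add (ht₂ L₁ L₂ hL) (hu₂ L₁ L₂ hL)

theorem SD_one_subset_add (n k l : ℕ) : SD n 1 (k + l) ⊆ SD n 1 k + SD n 1 l := by
  intro s hs
  obtain ⟨hzero, hpath⟩ := mem_SD_one_iff.1 hs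
  obtain ⟨t, u, rfl, hle⟩ := exists_add_eq_forall_isChain_rootStep_sum_le s k l
  have htu_zero (β : ℕ × ℕ) (hβ : ¬ inR n 1 β) : t β = 0 ∧ u β = 0 :=
    Nat.add_eq_zero_iff.1 (hzero β hβ)
  have htu_path (L : List (ℕ × ℕ)) (hL : IsType1 n 1 L) : (L.map t).sum ≤ k ∧ (L.map u).sum ≤ l :=
    hle 1 L hL.2.1 (fun β hβ ↦ (hL.2.2.1 β hβ).fst_eq_one) (hpath L hL)
  exact Set.add_mem_add
    (mem_SD_one_iff.2 ⟨fun β hβ ↦ (htu_zero β hβ).1, fun L hL ↦ (htu_path L hL).1⟩)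
    (mem_SD_one_iff.2 ⟨fun β hβ ↦ (htu_zero β hβ).2, fun L hL ↦ (htu_path L hL).2⟩)

theorem SD_omega1_minkowski_general (n k l : ℕ) : SD n 1 (k + l) = SD n 1 k + SD n 1 l :=
  (SD_one_subset_add n k l).antisymm (SD_add_subset n 1 k l)

/-- for `i = 1` and any `n ≥ 2`,
`S(D, m·ω₁) = S(D, (m-1)·ω₁) + S(D, ω₁)` for every `m ≥ 1`. -/
theorem SD_omega1_minkowski (n : ℕ) (hn : 2 ≤ n) (m : ℕ) (hm : 1 ≤ m) :
    SD n 1 m = SD n 1 (m - 1) + SD n 1 1 := by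
  rw [← SD_omega1_minkowski_general, Nat.sub_add_cancel hm]
end

section
/- Let n >= 2 and i = 2. Then for every integer m >= 1, S(D, m*omega_2) = S(D, (m-1)*omega_2) + S(D, omega_2). -/
open scoped Pointwise

/-!
Write `a_q` and `b_q` for the values of a multi-exponent `s` at `α_{1,q}` and `α_{2,q}`, and read
the second row before the first: `b_2, …, b_{2n-2}, a_2, …, a_{2n-1}`. If `n = 2`, or if `s`
vanishes at `α_{1,2}` or at `α_{2,2n-2}`, then the Dyck path inequalities amount to upper bounds on
sums over intervals of this word. To split a point for `m + 1` into points for `m` and for `1`,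
divide the partial sums of the word by `m + 1`, round down, and take the result and its complement
as the new partial sums; interval sums are differences of partial sums, so the bounds survive the
rounding. If `n ≥ 3` and `s` is positive at both `α_{1,2}` and `α_{2,2n-2}`, subtract the indicator
of these two roots: every type 1 path contains exactly one of them, and the only double path
contains both.
-/

section IntervalRounding

open Finset

variable {φ : ℕ → ℕ} {B C : ℕ}

/-- The sequence whose partial sums are the values of `φ` at the partial sums of `g`, up to the
constant `φ 0`; it rounds a multiple of `g` when `φ` rounds a linear function. -/
def roundedIncrement (φ g : ℕ → ℕ) (k : ℕ) : ℕ :=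
  φ (∑ i ∈ range (k + 1), g i) - φ (∑ i ∈ range k, g i)

lemma sum_Ico_roundedIncrement (hφ : Monotone φ) (g : ℕ → ℕ) {a b : ℕ} (hab : a ≤ b) :
    ∑ k ∈ Ico a b, roundedIncrement φ g k =
      φ (∑ i ∈ range b, g i) - φ (∑ i ∈ range a, g i) := by
  have hmono : Monotone fun k => φ (∑ i ∈ range (a + k), g i) := fun k l hkl =>
    hφ <| sum_le_sum_of_subset <| range_mono <| Nat.add_le_add_left hkl a
  rw [sum_Ico_eq_sum_range]
  simpa only [roundedIncrement, add_assoc, add_zero, Nat.add_sub_cancel' hab] using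
    sum_range_tsub hmono (b - a)

lemma sum_Ico_roundedIncrement_le (hφ : Monotone φ) (hBC : ∀ x, φ (x + B) ≤ φ x + C)
    (g : ℕ → ℕ) {a b : ℕ} (hg : ∑ k ∈ Ico a b, g k ≤ B) :
    ∑ k ∈ Ico a b, roundedIncrement φ g k ≤ C := by
  rcases le_total a b with hab | hba
  · rw [sum_Ico_roundedIncrement hφ g hab, tsub_le_iff_left, ← sum_range_add_sum_Ico g hab]
    exact (hφ (Nat.add_le_add_left hg _)).trans (hBC _)
  · simp [Ico_eq_empty_of_le hba]

lemma monotone_sub_div (m : ℕ) : Monotone fun x => x - x / (m + 1) := by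
  refine monotone_nat_of_le_succ fun x => ?_
  have hdiv : (x + 1) / (m + 1) ≤ x / (m + 1) + 1 := by
    rw [← Nat.add_div_right x m.succ_pos]
    exact Nat.div_le_div_right (by omega)
  omega

theorem exists_add_of_sum_Ico_le (g : ℕ → ℕ) (m : ℕ) :
    ∃ r t : ℕ → ℕ, g = r + t ∧ ∀ a b c, ∑ k ∈ Ico a b, g k ≤ (m + 1) * c →
      ∑ k ∈ Ico a b, r k ≤ m * c ∧ ∑ k ∈ Ico a b, t k ≤ 1 * c := by
  have hfloor : Monotone fun x => x / (m + 1) := fun x y => Nat.div_le_div_right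
  refine ⟨roundedIncrement (fun x => x - x / (m + 1)) g,
    roundedIncrement (fun x => x / (m + 1)) g, ?_, fun a b c hg =>
      ⟨sum_Ico_roundedIncrement_le (monotone_sub_div m) (fun x => ?_) g hg,
        sum_Ico_roundedIncrement_le hfloor (fun x => ?_) g hg⟩⟩
  · funext k
    have hle (x : ℕ) : x / (m + 1) ≤ x := Nat.div_le_self x (m + 1)
    have hstep : ∑ i ∈ range k, g i ≤ ∑ i ∈ range (k + 1), g i := by simp [sum_range_succ]
    have hrest := monotone_sub_div m hstep
    have hpart := hfloor hstep
    have := hle (∑ i ∈ range k, g i)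
    have := hle (∑ i ∈ range (k + 1), g i)
    have := sum_range_succ g k
    simp only [Pi.add_apply, roundedIncrement] at hrest hpart ⊢
    omega
  · have := Nat.div_le_self x (m + 1)
    have := add_one_mul m c
    simp only [Nat.add_mul_div_left x c (Nat.succ_pos m), Nat.succ_eq_add_one]
    omega
  · simp only [Nat.add_mul_div_left x c m.succ_pos, one_mul, le_refl]

theorem exists_add_of_sum_Ico_comp_le {α : Type*} {e : ℕ → α} (he : e.Injective) {s : α → ℕ}
    (hs : ∀ x ∉ Set.range e, s x = 0) (m : ℕ) :
    ∃ r t : α → ℕ, s = r + t ∧ ∀ a b c, ∑ k ∈ Ico a b, s (e k) ≤ (m + 1) * c →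
      ∑ k ∈ Ico a b, r (e k) ≤ m * c ∧ ∑ k ∈ Ico a b, t (e k) ≤ 1 * c := by
  obtain ⟨r, t, hrt, hbound⟩ := exists_add_of_sum_Ico_le (s ∘ e) m
  refine ⟨Function.extend e r 0, Function.extend e t 0, ?_, ?_⟩
  · rw [← Function.extend_add, ← hrt, add_zero]
    funext x
    by_cases hx : x ∈ Set.range e
    · obtain ⟨k, rfl⟩ := hx
      rw [he.extend_apply, Function.comp_apply]
    · rw [hs x hx, Function.extend_apply' _ _ _ hx, Pi.zero_apply]
  · simpa only [he.extend_apply, Function.comp_apply] using hbound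

end IntervalRounding

section RootPaths

/-- `IsRootPath a b L` says that the list `L` of roots starts at `a`, ends at `b` and proceeds by
root steps. -/
inductive IsRootPath : ℕ × ℕ → ℕ × ℕ → List (ℕ × ℕ) → Prop
  | single (a) : IsRootPath a a [a]
  | cons {a b c L} : RootStep a c → IsRootPath c b L → IsRootPath a b (a :: L)

variable {a b c d : ℕ × ℕ} {L L' : List (ℕ × ℕ)}

lemma isRootPath_iff :
    IsRootPath a b L ↔ L.IsChain RootStep ∧ L.head? = some a ∧ L.getLast? = some b := by
  constructor
  · intro h
    induction h with
    | single a => simp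
    | @cons a b c L hac _ ih =>
      obtain ⟨hchain, hhead, hlast⟩ := ih
      refine ⟨List.isChain_cons.2 ⟨fun y hy => ?_, hchain⟩, rfl, ?_⟩
      · rw [hhead, Option.mem_some_iff] at hy
        exact hy ▸ hac
      · rw [List.getLast?_cons, hlast, Option.getD_some]
  · rintro ⟨hchain, hhead, hlast⟩
    induction L generalizing a with
    | nil => simp at hhead
    | cons x L ih =>
      obtain rfl : x = a := by simpa using hhead
      cases L with
      | nil =>
        obtain rfl : x = b := by simpa using hlast
        exact .single x
      | cons y L =>
        rw [List.isChain_cons_cons] at hchain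
        exact .cons hchain.1 (ih hchain.2 rfl (by rwa [List.getLast?_cons_cons] at hlast))

lemma rootStep_succ_right (p q : ℕ) : RootStep (p, q) (p, q + 1) := .inl ⟨rfl, rfl⟩

lemma rootStep_succ_left (p q : ℕ) : RootStep (p, q) (p + 1, q) := .inr ⟨rfl, rfl⟩

lemma RootStep.le (h : RootStep a b) : a ≤ b := by
  rw [Prod.le_def]
  unfold RootStep at h
  omega

lemma IsRootPath.ne_nil (h : IsRootPath a b L) : L ≠ [] := by
  cases h <;> exact List.cons_ne_nil _ _

lemma IsRootPath.le (h : IsRootPath a b L) : a ≤ b := by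
  induction h with
  | single a => rfl
  | cons hac _ ih => exact hac.le.trans ih

lemma IsRootPath.append (h : IsRootPath a b L) (hbc : RootStep b c) (h' : IsRootPath c d L') :
    IsRootPath a d (L ++ L') := by
  induction h with
  | single a => exact .cons hbc h'
  | cons hac _ ih => exact .cons hac (ih hbc)

/-- The roots `α_{p,c}, …, α_{p,d-1}` of the `p`-th row. -/
def rowPath (p c d : ℕ) : List (ℕ × ℕ) := (List.Ico c d).map (Prod.mk p)

lemma mem_rowPath {p c d : ℕ} {x : ℕ × ℕ} : x ∈ rowPath p c d ↔ x.1 = p ∧ c ≤ x.2 ∧ x.2 < d := by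
  obtain ⟨x₁, x₂⟩ := x
  simp only [rowPath, List.mem_map, List.Ico.mem, Prod.mk.injEq]
  exact ⟨by rintro ⟨k, hk, rfl, rfl⟩; exact ⟨rfl, hk⟩, fun ⟨hp, hk⟩ => ⟨x₂, hk, hp.symm, rfl⟩⟩

lemma rowPath_eq_cons {p c d : ℕ} (h : c < d) : rowPath p c d = (p, c) :: rowPath p (c + 1) d := by
  rw [rowPath, List.Ico.eq_cons h, List.map_cons, rowPath]

lemma rowPath_succ (p c : ℕ) : rowPath p c (c + 1) = [(p, c)] := by
  rw [rowPath, List.Ico.succ_singleton, List.map_singleton]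

lemma sum_map_rowPath (s : ℕ × ℕ → ℕ) (p c d : ℕ) :
    ((rowPath p c d).map s).sum = ∑ q ∈ Finset.Ico c d, s (p, q) := by
  rw [rowPath, List.map_map]
  rfl

lemma isRootPath_rowPath (p : ℕ) {c d : ℕ} (h : c ≤ d) :
    IsRootPath (p, c) (p, d) (rowPath p c (d + 1)) := by
  induction h using Nat.decreasingInduction with
  | self => exact rowPath_succ p d ▸ .single _
  | of_succ c hcd ih =>
    rw [rowPath_eq_cons (by omega)]
    exact .cons (rootStep_succ_right p c) ih

lemma isRootPath_rowPath_append (p : ℕ) {c k d : ℕ} (hck : c ≤ k) (hkd : k ≤ d) :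
    IsRootPath (p, c) (p + 1, d) (rowPath p c (k + 1) ++ rowPath (p + 1) k (d + 1)) :=
  (isRootPath_rowPath p hck).append (rootStep_succ_left p k) (isRootPath_rowPath (p + 1) hkd)

lemma IsRootPath.eq_rowPath {p c d : ℕ} (h : IsRootPath (p, c) (p, d) L) :
    L = rowPath p c (d + 1) := by
  induction L generalizing c with
  | nil => cases h
  | cons x L ih =>
    cases h with
    | single => rw [rowPath_succ]
    | @cons _ _ y _ hstep hL =>
      obtain ⟨hrow, hcol⟩ := Prod.le_def.1 hL.le
      obtain ⟨y₁, y₂⟩ := y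
      simp only [RootStep] at hstep hrow hcol
      obtain ⟨rfl, rfl⟩ : y₁ = p ∧ y₂ = c + 1 := by omega
      rw [ih hL, ← rowPath_eq_cons (by omega)]

lemma IsRootPath.exists_eq_rowPath_append {p c d : ℕ} (h : IsRootPath (p, c) (p + 1, d) L) :
    ∃ k, c ≤ k ∧ k ≤ d ∧ L = rowPath p c (k + 1) ++ rowPath (p + 1) k (d + 1) := by
  induction L generalizing c with
  | nil => cases h
  | cons x L ih =>
    cases h with
    | @cons _ _ y _ hstep hL =>
      obtain ⟨y₁, y₂⟩ := y
      obtain ⟨rfl, rfl⟩ | ⟨rfl, rfl⟩ : (y₁ = p ∧ y₂ = c + 1) ∨ (y₁ = p + 1 ∧ y₂ = c) := hstep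
      · obtain ⟨k, hck, hkd, rfl⟩ := ih hL
        exact ⟨k, by omega, hkd, by rw [← List.cons_append, ← rowPath_eq_cons (by omega)]⟩
      · refine ⟨_, le_rfl, (Prod.le_def.1 hL.le).2, ?_⟩
        rw [hL.eq_rowPath, rowPath_succ, List.singleton_append]

end RootPaths

section DyckPaths

variable {n : ℕ} {L L' : List (ℕ × ℕ)}

lemma isType1_iff_isRootPath {i : ℕ} : IsType1 n i L ↔ (∀ x ∈ L, inR n i x) ∧
    (IsRootPath (1, i) (i, 2 * n - i - 1) L ∨ IsRootPath (1, i + 1) (i, 2 * n - i) L) := by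
  simp only [isRootPath_iff, IsType1]
  refine ⟨by tauto, fun h => ⟨?_, by tauto⟩⟩
  rintro rfl
  simp at h

lemma isType1_two_iff : IsType1 n 2 L ↔
    (∃ k, 2 ≤ k ∧ k ≤ 2 * n - 3 ∧ L = rowPath 1 2 (k + 1) ++ rowPath 2 k (2 * n - 2)) ∨
      ∃ k, 3 ≤ k ∧ k ≤ 2 * n - 2 ∧ L = rowPath 1 3 (k + 1) ++ rowPath 2 k (2 * n - 1) := by
  rw [isType1_iff_isRootPath]
  constructor
  · rintro ⟨-, h | h⟩
    · obtain ⟨k, hk, hk', rfl⟩ := h.exists_eq_rowPath_append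
      exact .inl ⟨k, hk, by omega, by congr 2; omega⟩
    · obtain ⟨k, hk, hk', rfl⟩ := h.exists_eq_rowPath_append
      exact .inr ⟨k, hk, by omega, by congr 2; omega⟩
  · rintro (⟨k, hk, hk', rfl⟩ | ⟨k, hk, hk', rfl⟩)
    · refine ⟨fun x hx => ?_, .inl ?_⟩
      · simp only [List.mem_append, mem_rowPath] at hx
        unfold inR
        omega
      · rw [show 2 * n - 2 = 2 * n - 2 - 1 + 1 by omega]
        exact isRootPath_rowPath_append 1 hk (by omega)
    · refine ⟨fun x hx => ?_, .inr ?_⟩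
      · simp only [List.mem_append, mem_rowPath] at hx
        unfold inR
        omega
      · rw [show 2 * n - 1 = 2 * n - 2 + 1 by omega]
        exact isRootPath_rowPath_append 1 hk hk'

lemma isType2_two_iff (hn : 2 ≤ n) :
    IsType2 n 2 L L' ↔ L = rowPath 1 2 (2 * n) ∧ L' = rowPath 2 2 (2 * n - 1) := by
  constructor
  · rintro ⟨j, hj, hj', -, -, hc, hc', -, -, hh, hh', hl, hl', -⟩
    obtain rfl : j = 1 := by omega
    have hL := (isRootPath_iff.2 ⟨hc, hh, hl⟩).eq_rowPath
    have hL' := (isRootPath_iff.2 ⟨hc', hh', hl'⟩).eq_rowPath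
    exact ⟨hL.trans (by congr 1; omega), hL'.trans (by congr 1; omega)⟩
  · rintro ⟨rfl, rfl⟩
    have hL : IsRootPath (1, 2) (1, 2 * n - 1) (rowPath 1 2 (2 * n)) := by
      simpa only [Nat.sub_add_cancel (show 1 ≤ 2 * n by omega)] using
        isRootPath_rowPath 1 (show 2 ≤ 2 * n - 1 by omega)
    have hL' : IsRootPath (2, 2) (2, 2 * n - 1 - 1) (rowPath 2 2 (2 * n - 1)) := by
      simpa only [Nat.sub_add_cancel (show 1 ≤ 2 * n - 1 by omega)] using
        isRootPath_rowPath 2 (show 2 ≤ 2 * n - 1 - 1 by omega)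
    obtain ⟨hc, hh, hl⟩ := isRootPath_iff.1 hL
    obtain ⟨hc', hh', hl'⟩ := isRootPath_iff.1 hL'
    refine ⟨1, le_rfl, one_lt_two, hL.ne_nil, hL'.ne_nil, hc, hc', fun x hx => ?_,
      fun x hx => ?_, hh, hh', hl, hl', fun x hx => ?_⟩
    all_goals
      simp only [mem_rowPath, inR] at hx ⊢
      omega

end DyckPaths

section Polytope

open Finset

variable {n m : ℕ} {s : ℕ × ℕ → ℕ}

/-- The two families of type 1 paths, indexed by the column `k` in which the path changes rows, and
the only type 2 path. -/
lemma mem_SD_two_iff (hn : 2 ≤ n) : s ∈ SD n 2 m ↔ (∀ β, ¬ inR n 2 β → s β = 0) ∧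
    (∀ k, 2 ≤ k → k ≤ 2 * n - 3 →
      ∑ q ∈ Ico 2 (k + 1), s (1, q) + ∑ q ∈ Ico k (2 * n - 2), s (2, q) ≤ m) ∧
    (∀ k, 3 ≤ k → k ≤ 2 * n - 2 →
      ∑ q ∈ Ico 3 (k + 1), s (1, q) + ∑ q ∈ Ico k (2 * n - 1), s (2, q) ≤ m) ∧
    ∑ q ∈ Ico 2 (2 * n), s (1, q) + ∑ q ∈ Ico 2 (2 * n - 1), s (2, q) ≤
      m * cB n 2 := by
  simp only [SD, Set.mem_ofPred_eq, isType1_two_iff, isType2_two_iff hn, ← sum_map_rowPath,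
    ← List.sum_append, ← List.map_append]
  refine and_congr_right fun _ => ⟨fun ⟨h, h'⟩ => ⟨?_, ?_, h' _ _ ⟨rfl, rfl⟩⟩, ?_⟩
  · exact fun k hk hk' => h _ (.inl ⟨k, hk, hk', rfl⟩)
  · exact fun k hk hk' => h _ (.inr ⟨k, hk, hk', rfl⟩)
  · rintro ⟨h, h', h''⟩
    refine ⟨?_, by rintro _ _ ⟨rfl, rfl⟩; exact h''⟩
    rintro _ (⟨k, hk, hk', rfl⟩ | ⟨k, hk, hk', rfl⟩)
    exacts [h k hk hk', h' k hk hk']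

lemma add_subset_SD (n i m m' : ℕ) : SD n i m + SD n i m' ⊆ SD n i (m + m') := by
  rintro _ ⟨s, ⟨hsupp, hone, htwo⟩, t, ⟨hsupp', hone', htwo'⟩, rfl⟩
  have hsum (L : List (ℕ × ℕ)) : (L.map (s + t)).sum = (L.map s).sum + (L.map t).sum :=
    List.sum_map_add
  refine ⟨fun β hβ => ?_, fun L hL => ?_, fun L L' hL => ?_⟩
  · simp [hsupp β hβ, hsupp' β hβ]
  · simpa only [hsum] using Nat.add_le_add (hone L hL) (hone' L hL)
  · simpa only [hsum, add_mul] using Nat.add_le_add (htwo L L' hL) (htwo' L L' hL)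

/-- The enumeration of the roots of `R_2^+` in which the second row precedes the first one:
`α_{2,q}` has position `q` and `α_{1,q}` has position `q + 2n - 3`. The positions below `2` and from
`4n - 3` on carry pairs outside `R_2^+`. -/
def readingRoot (n j : ℕ) : ℕ × ℕ := if j < 2 * n - 1 then (2, j) else (1, j - (2 * n - 3))

lemma readingRoot_of_lt {q : ℕ} (h : q < 2 * n - 1) : readingRoot n q = (2, q) := if_pos h

lemma readingRoot_add {q : ℕ} (h : 2 ≤ q) : readingRoot n (q + (2 * n - 3)) = (1, q) := by
  rw [readingRoot, if_neg (by omega), Nat.add_sub_cancel]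

lemma readingRoot_injective (n : ℕ) : (readingRoot n).Injective := by
  intro j k h
  unfold readingRoot at h
  split_ifs at h <;> simp only [Prod.mk.injEq] at h <;> omega

lemma inR.mem_range_readingRoot {β : ℕ × ℕ} (h : inR n 2 β) : β ∈ Set.range (readingRoot n) := by
  obtain ⟨p, q⟩ := β
  obtain ⟨hp, hp', hq, hpq⟩ := h
  dsimp only at hp hp' hq hpq
  obtain rfl | rfl : p = 1 ∨ p = 2 := by omega
  · exact ⟨q + (2 * n - 3), readingRoot_add hq⟩
  · exact ⟨q, readingRoot_of_lt (by omega)⟩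

lemma sum_second_row_eq (s : ℕ × ℕ → ℕ) (c : ℕ) {d : ℕ} (hd : d ≤ 2 * n - 1) :
    ∑ q ∈ Ico c d, s (2, q) = ∑ j ∈ Ico c d, s (readingRoot n j) :=
  sum_congr rfl fun q hq => by rw [readingRoot_of_lt ((mem_Ico.1 hq).2.trans_le hd)]

lemma sum_first_row_eq (n : ℕ) (s : ℕ × ℕ → ℕ) {c : ℕ} (hc : 2 ≤ c) (d : ℕ) :
    ∑ q ∈ Ico c d, s (1, q) =
      ∑ j ∈ Ico (c + (2 * n - 3)) (d + (2 * n - 3)), s (readingRoot n j) := by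
  rw [← sum_Ico_add']
  exact sum_congr rfl fun q hq => by rw [readingRoot_add (hc.trans (mem_Ico.1 hq).1)]

lemma sum_first_row_add_sum_second_row_eq (hn : 2 ≤ n) (s : ℕ × ℕ → ℕ) {c d : ℕ}
    (hc : c ≤ 2 * n - 1) (hd : 2 ≤ d) :
    ∑ q ∈ Ico 2 d, s (1, q) + ∑ q ∈ Ico c (2 * n - 1), s (2, q) =
      ∑ j ∈ Ico c (d + (2 * n - 3)), s (readingRoot n j) := by
  rw [sum_first_row_eq n s le_rfl, sum_second_row_eq s c le_rfl, add_comm,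
    show 2 + (2 * n - 3) = 2 * n - 1 by omega, sum_Ico_consecutive _ hc (by omega)]

lemma sum_first_row_eq_of_first_eq_zero (h : s (1, 2) = 0) {d : ℕ} (hd : 2 < d) :
    ∑ q ∈ Ico 2 d, s (1, q) = ∑ q ∈ Ico 3 d, s (1, q) := by
  rw [sum_eq_sum_Ico_succ_bot hd, h, zero_add]

lemma sum_second_row_eq_of_last_eq_zero (hn : 2 ≤ n) (h : s (2, 2 * n - 2) = 0) {c : ℕ}
    (hc : c ≤ 2 * n - 2) :
    ∑ q ∈ Ico c (2 * n - 1), s (2, q) = ∑ q ∈ Ico c (2 * n - 2), s (2, q) := by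
  rw [show 2 * n - 1 = 2 * n - 2 + 1 by omega, sum_Ico_succ_top hc, h, add_zero]

lemma mem_SD_two_two_iff : s ∈ SD 2 2 m ↔ (∀ β, ¬ inR 2 2 β → s β = 0) ∧
    ∑ j ∈ Ico 2 5, s (readingRoot 2 j) ≤ m * 1 := by
  rw [mem_SD_two_iff le_rfl,
    sum_first_row_add_sum_second_row_eq le_rfl s (by norm_num) (by norm_num)]
  exact and_congr_right fun _ =>
    ⟨fun ⟨_, _, h⟩ => h, fun h => ⟨fun k hk hk' => by omega, fun k hk hk' => by omega, h⟩⟩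

/-- The paths from `α_{1,3}` become redundant, except for the one along the whole first row. -/
lemma mem_SD_two_iff_of_last_eq_zero (hn : 3 ≤ n) (h : s (2, 2 * n - 2) = 0) :
    s ∈ SD n 2 m ↔ (∀ β, ¬ inR n 2 β → s β = 0) ∧
      (∀ k, 2 ≤ k → k ≤ 2 * n - 3 →
        ∑ j ∈ Ico k (k + 1 + (2 * n - 3)), s (readingRoot n j) ≤ m * 1) ∧
      ∑ j ∈ Ico (3 + (2 * n - 3)) (2 * n - 1 + (2 * n - 3)), s (readingRoot n j) ≤ m * 1 ∧
      ∑ j ∈ Ico 2 (2 * n + (2 * n - 3)), s (readingRoot n j) ≤ m * cB n 2 := by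
  have hn2 : 2 ≤ n := by omega
  have hlast {c : ℕ} := sum_second_row_eq_of_last_eq_zero hn2 h (c := c)
  rw [mem_SD_two_iff hn2, ← sum_first_row_eq n s (by norm_num),
    ← sum_first_row_add_sum_second_row_eq hn2 s (by omega) (by omega)]
  simp only [mul_one]
  have hwindow (k : ℕ) (hk : 2 ≤ k) (hk' : k ≤ 2 * n - 3) :
      ∑ q ∈ Ico 2 (k + 1), s (1, q) + ∑ q ∈ Ico k (2 * n - 2), s (2, q) =
        ∑ j ∈ Ico k (k + 1 + (2 * n - 3)), s (readingRoot n j) := by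
    rw [← hlast (by omega), sum_first_row_add_sum_second_row_eq hn2 s (by omega) (by omega)]
  refine and_congr_right fun _ => ⟨fun ⟨hfst, hsnd, htotal⟩ => ⟨fun k hk hk' => ?_, ?_, htotal⟩,
    fun ⟨hfst, hrow, htotal⟩ => ⟨fun k hk hk' => ?_, fun k hk hk' => ?_, htotal⟩⟩
  · exact hwindow k hk hk' ▸ hfst k hk hk'
  · have := hsnd (2 * n - 2) (by omega) le_rfl
    rw [show 2 * n - 2 + 1 = 2 * n - 1 by omega] at this
    exact (Nat.le_add_right _ _).trans this
  · exact hwindow k hk hk' ▸ hfst k hk hk'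
  · rw [hlast hk']
    rcases hk'.eq_or_lt with rfl | hlt
    · simpa [show 2 * n - 2 + 1 = 2 * n - 1 by omega] using hrow
    · refine le_trans (Nat.add_le_add_right ?_ _) ((hwindow k (by omega) (by omega)).trans_le
        (hfst k (by omega) (by omega)))
      exact sum_le_sum_of_subset (Ico_subset_Ico_left (by norm_num))

/-- The paths from `α_{1,2}` become redundant, except for the one along the whole second row. -/
lemma mem_SD_two_iff_of_first_eq_zero (hn : 3 ≤ n) (h : s (1, 2) = 0) :
    s ∈ SD n 2 m ↔ (∀ β, ¬ inR n 2 β → s β = 0) ∧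
      (∀ k, 3 ≤ k → k ≤ 2 * n - 2 →
        ∑ j ∈ Ico k (k + 1 + (2 * n - 3)), s (readingRoot n j) ≤ m * 1) ∧
      ∑ j ∈ Ico 2 (2 * n - 2), s (readingRoot n j) ≤ m * 1 ∧
      ∑ j ∈ Ico 2 (2 * n + (2 * n - 3)), s (readingRoot n j) ≤ m * cB n 2 := by
  have hn2 : 2 ≤ n := by omega
  rw [mem_SD_two_iff hn2, ← sum_second_row_eq s 2 (by omega),
    ← sum_first_row_add_sum_second_row_eq hn2 s (by omega) (by omega)]
  simp only [mul_one]
  have hwindow (k : ℕ) (hk : 3 ≤ k) (hk' : k ≤ 2 * n - 2) :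
      ∑ q ∈ Ico 3 (k + 1), s (1, q) + ∑ q ∈ Ico k (2 * n - 1), s (2, q) =
        ∑ j ∈ Ico k (k + 1 + (2 * n - 3)), s (readingRoot n j) := by
    rw [← sum_first_row_eq_of_first_eq_zero h (by omega),
      sum_first_row_add_sum_second_row_eq hn2 s (by omega) (by omega)]
  refine and_congr_right fun _ => ⟨fun ⟨hfst, hsnd, htotal⟩ => ⟨fun k hk hk' => ?_, ?_, htotal⟩,
    fun ⟨hsnd, hrow, htotal⟩ => ⟨fun k hk hk' => ?_, fun k hk hk' => ?_, htotal⟩⟩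
  · exact hwindow k hk hk' ▸ hsnd k hk hk'
  · exact (Nat.le_add_left _ _).trans (hfst 2 le_rfl (by omega))
  · rw [sum_first_row_eq_of_first_eq_zero h (by omega)]
    rcases hk.eq_or_lt with rfl | hlt
    · simpa using hrow
    · refine le_trans (Nat.add_le_add_left ?_ _) ((hwindow k hlt (by omega)).trans_le
        (hsnd k hlt (by omega)))
      exact sum_le_sum_of_subset (Ico_subset_Ico_right (by omega))
  · exact hwindow k hk hk' ▸ hsnd k hk hk'

lemma exists_add_of_sum_readingRoot_le (hs : ∀ β, ¬ inR n 2 β → s β = 0) (m : ℕ) :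
    ∃ r t : ℕ × ℕ → ℕ, s = r + t ∧
      (∀ β, ¬ inR n 2 β → r β = 0) ∧ (∀ β, ¬ inR n 2 β → t β = 0) ∧
      ∀ {a b c}, ∑ j ∈ Ico a b, s (readingRoot n j) ≤ (m + 1) * c →
        ∑ j ∈ Ico a b, r (readingRoot n j) ≤ m * c ∧
          ∑ j ∈ Ico a b, t (readingRoot n j) ≤ 1 * c := by
  have hrange (β : ℕ × ℕ) (hβ : β ∉ Set.range (readingRoot n)) : s β = 0 :=
    hs β fun h => hβ h.mem_range_readingRoot
  obtain ⟨r, t, rfl, hsplit⟩ := exists_add_of_sum_Ico_comp_le (readingRoot_injective n) hrange m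
  exact ⟨r, t, rfl, fun β hβ => (Nat.add_eq_zero_iff.1 (hs β hβ)).1,
    fun β hβ => (Nat.add_eq_zero_iff.1 (hs β hβ)).2, hsplit _ _ _⟩

lemma mem_SD_add_SD_of_last_eq_zero (hn : 3 ≤ n) (hs : s ∈ SD n 2 (m + 1))
    (h : s (2, 2 * n - 2) = 0) : s ∈ SD n 2 m + SD n 2 1 := by
  obtain ⟨hsupp, hwindow, hrow, htotal⟩ := (mem_SD_two_iff_of_last_eq_zero hn h).1 hs
  obtain ⟨r, t, rfl, hr, ht, hsplit⟩ := exists_add_of_sum_readingRoot_le hsupp m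
  obtain ⟨hr0, ht0⟩ := Nat.add_eq_zero_iff.1 h
  refine Set.add_mem_add ((mem_SD_two_iff_of_last_eq_zero hn hr0).2 ⟨hr, ?_⟩)
    ((mem_SD_two_iff_of_last_eq_zero hn ht0).2 ⟨ht, ?_⟩)
  · exact ⟨fun k hk hk' => (hsplit (hwindow k hk hk')).1, (hsplit hrow).1, (hsplit htotal).1⟩
  · exact ⟨fun k hk hk' => (hsplit (hwindow k hk hk')).2, (hsplit hrow).2, (hsplit htotal).2⟩

lemma mem_SD_add_SD_of_first_eq_zero (hn : 3 ≤ n) (hs : s ∈ SD n 2 (m + 1)) (h : s (1, 2) = 0) :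
    s ∈ SD n 2 m + SD n 2 1 := by
  obtain ⟨hsupp, hwindow, hrow, htotal⟩ := (mem_SD_two_iff_of_first_eq_zero hn h).1 hs
  obtain ⟨r, t, rfl, hr, ht, hsplit⟩ := exists_add_of_sum_readingRoot_le hsupp m
  obtain ⟨hr0, ht0⟩ := Nat.add_eq_zero_iff.1 h
  refine Set.add_mem_add ((mem_SD_two_iff_of_first_eq_zero hn hr0).2 ⟨hr, ?_⟩)
    ((mem_SD_two_iff_of_first_eq_zero hn ht0).2 ⟨ht, ?_⟩)
  · exact ⟨fun k hk hk' => (hsplit (hwindow k hk hk')).1, (hsplit hrow).1, (hsplit htotal).1⟩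
  · exact ⟨fun k hk hk' => (hsplit (hwindow k hk hk')).2, (hsplit hrow).2, (hsplit htotal).2⟩

lemma SD_two_two_succ_subset (m : ℕ) : SD 2 2 (m + 1) ⊆ SD 2 2 m + SD 2 2 1 := by
  intro s hs
  obtain ⟨hsupp, htotal⟩ := mem_SD_two_two_iff.1 hs
  obtain ⟨r, t, rfl, hr, ht, hsplit⟩ := exists_add_of_sum_readingRoot_le hsupp m
  exact Set.add_mem_add (mem_SD_two_two_iff.2 ⟨hr, (hsplit htotal).1⟩)
    (mem_SD_two_two_iff.2 ⟨ht, (hsplit htotal).2⟩)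

/-- The indicator function of `{α_{1,2}, α_{2,2n-2}}`, which meets every type 1 path exactly once
for `n ≥ 3`. -/
def endsIndicator (n : ℕ) : ℕ × ℕ → ℕ := Pi.single (1, 2) 1 + Pi.single (2, 2 * n - 2) 1

lemma sum_endsIndicator_first_row (n c d : ℕ) :
    ∑ q ∈ Ico c d, endsIndicator n (1, q) = if 2 ∈ Ico c d then 1 else 0 := by
  simp [endsIndicator, Pi.single_apply]

lemma sum_endsIndicator_second_row (n c d : ℕ) :
    ∑ q ∈ Ico c d, endsIndicator n (2, q) = if 2 * n - 2 ∈ Ico c d then 1 else 0 := by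
  simp [endsIndicator, Pi.single_apply]

lemma endsIndicator_eq_zero_of_not_inR (hn : 2 ≤ n) {β : ℕ × ℕ} (hβ : ¬ inR n 2 β) :
    endsIndicator n β = 0 := by
  have h₁ : β ≠ (1, 2) := by
    rintro rfl
    exact hβ ⟨le_rfl, by norm_num, le_rfl, by dsimp only; omega⟩
  have h₂ : β ≠ (2, 2 * n - 2) := by
    rintro rfl
    exact hβ ⟨by norm_num, le_rfl, by dsimp only; omega, by dsimp only; omega⟩
  rw [endsIndicator, Pi.add_apply, Pi.single_eq_of_ne h₁, Pi.single_eq_of_ne h₂, add_zero]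

lemma endsIndicator_le (hfst : 0 < s (1, 2)) (hlast : 0 < s (2, 2 * n - 2)) :
    endsIndicator n ≤ s := by
  rintro ⟨p, q⟩
  simp only [endsIndicator, Pi.add_apply, Pi.single_apply, Prod.mk.injEq]
  split_ifs with h₁ h₂ h₂
  · omega
  · obtain ⟨rfl, rfl⟩ := h₁
    exact hfst
  · obtain ⟨rfl, rfl⟩ := h₂
    exact hlast
  · exact Nat.zero_le _

lemma add_endsIndicator_mem_SD_iff (hn : 3 ≤ n) :
    s + endsIndicator n ∈ SD n 2 (m + 1) ↔ s ∈ SD n 2 m := by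
  have hn2 : 2 ≤ n := by omega
  have hcB : cB n 2 = 2 := if_neg (by omega)
  rw [mem_SD_two_iff hn2, mem_SD_two_iff hn2]
  simp only [Pi.add_apply, sum_add_distrib, sum_endsIndicator_first_row,
    sum_endsIndicator_second_row, mem_Ico, hcB]
  refine and_congr (forall₂_congr fun β hβ => ?_) (and_congr ?_ (and_congr ?_ ?_))
  · rw [endsIndicator_eq_zero_of_not_inR hn2 hβ, add_zero]
  · refine forall₃_congr fun k hk hk' => ?_
    rw [if_pos (by omega), if_neg (by omega)]
    omega
  · refine forall₃_congr fun k hk hk' => ?_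
    rw [if_neg (by omega), if_pos (by omega)]
    omega
  · rw [if_pos (by omega), if_pos (by omega)]
    omega

lemma endsIndicator_mem_SD (hn : 3 ≤ n) : endsIndicator n ∈ SD n 2 1 := by
  rw [← zero_add (endsIndicator n), ← zero_add 1, add_endsIndicator_mem_SD_iff hn]
  simp [SD, Pi.zero_def]

lemma mem_SD_add_SD_of_first_pos_of_last_pos (hn : 3 ≤ n) (hs : s ∈ SD n 2 (m + 1))
    (hfst : 0 < s (1, 2)) (hlast : 0 < s (2, 2 * n - 2)) : s ∈ SD n 2 m + SD n 2 1 := by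
  have hsub : s - endsIndicator n + endsIndicator n = s :=
    tsub_add_cancel_of_le (endsIndicator_le hfst hlast)
  rw [← hsub, add_endsIndicator_mem_SD_iff hn] at hs
  exact hsub ▸ Set.add_mem_add hs (endsIndicator_mem_SD hn)

end Polytope

/-- for `i = 2` and any `n ≥ 2`,
`S(D, m·ω₂) = S(D, (m-1)·ω₂) + S(D, ω₂)` for every `m ≥ 1`. -/
theorem SD_omega2_minkowski (n : ℕ) (hn : 2 ≤ n) (m : ℕ) (hm : 1 ≤ m) :
    SD n 2 m = SD n 2 (m - 1) + SD n 2 1 := by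
  obtain ⟨m, rfl⟩ := Nat.exists_eq_add_of_le' hm
  rw [Nat.add_sub_cancel]
  refine Set.Subset.antisymm (fun s hs => ?_) (add_subset_SD n 2 m 1)
  obtain rfl | hn : n = 2 ∨ 3 ≤ n := by omega
  · exact SD_two_two_succ_subset m hs
  rcases (s (1, 2)).eq_zero_or_pos with hfst | hfst
  · exact mem_SD_add_SD_of_first_eq_zero hn hs hfst
  rcases (s (2, 2 * n - 2)).eq_zero_or_pos with hlast | hlast
  · exact mem_SD_add_SD_of_last_eq_zero hn hs hlast
  · exact mem_SD_add_SD_of_first_pos_of_last_pos hn hs hfst hlast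
end

section
/- Let n >= 3 and i = 3. Then for every integer m >= 2, S(D, m*omega_3) = S(D, (m-2)*omega_3) + S(D, 2*omega_3). -/
open scoped Pointwise

/-!
For `i = 3` the Dyck path inequalities only involve the partial sums of the three rows
`x`, `y`, `z` of a multi-exponent. If `n > 3`, the last entry of `x` lies on a single path, a double
one, so it is a slack variable, and the others are indexed so that `x₀, …, x_{k+1}` remain, with
`k = 2n - 6`.

A solution at level `m` splits into one at level `1` and one at level `m - 1`, unless `z_k = 0`
while `x₀`, `y_k` and `x_{k+1}` are positive. Depending on which corner entries vanish and which
inequalities are tight, the summand at level `1` consists of two units at extreme entries, or of the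
first available units of the rows. In the exceptional case, removing the twist, one unit from each
of `x₀`, `y_k` and `x_{k+1}`, leaves a solution at level `m - 1`. By induction it is a sum of
solutions at levels `1` and `m - 2`, and the twist raises the level of either of them by one as long
as its double path through `x` and `y` is not tight. This gives a splitting at level `1`, or at
level `2` if that path is tight for the whole solution, so a solution at level `2` can always be
split off.

For `n = 3` double paths have the same bound as single ones, which they dominate, and the greedy
choice of two units works.
-/

/-- The contribution `x₀ + ⋯ + x_a + y_a + ⋯ + y_b + z_b + ⋯ + z_{e-1}` of a path which leaves the
first row in column `a`, the second one in column `b`, and the third one in column `e - 1`; here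
`X`, `Y`, `Z` are the partial sums of the rows, `X t = x₀ + ⋯ + x_{t-1}`. -/
def pathSum (X Y Z : ℕ → ℤ) (a b e : ℕ) : ℤ :=
  X (a + 1) + (Y (b + 1) - Y a) + (Z e - Z b)

/-- The Dyck path inequalities for `i = 3` and `n > 3`, with `k = 2n - 6`, in terms of the partial
sums `X`, `Y`, `Z` of the three rows of a multi-exponent. The last entry `x_{k+2}` of the first row
only occurs in `top`, where it is treated as a slack variable and left out. -/
structure RowSystem (k : ℕ) (m : ℤ) (X Y Z : ℕ → ℤ) : Prop where
  x_zero : X 0 = 0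
  y_zero : Y 0 = 0
  z_zero : Z 0 = 0
  x_mono : Monotone X
  y_mono : Monotone Y
  z_mono : Monotone Z
  short : ∀ a b, a ≤ b → b < k → pathSum X Y Z a b k ≤ m
  long : ∀ a b, 1 ≤ a → a ≤ b → b ≤ k → pathSum X Y Z a b (k + 1) ≤ m + X 1
  double : ∀ a b, b < a → a ≤ k + 1 → b ≤ k →
    pathSum X Y Z a b (k + 1) + Y (k + 2) ≤ 2 * m
  top : X (k + 2) + Y (k + 2) ≤ 2 * m

/-- The partial sums `X`, `Y`, `Z` split into a solution at level `l` and one at level `m`. -/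
def RowSplit (k : ℕ) (l m : ℤ) (X Y Z : ℕ → ℤ) : Prop :=
  ∃ U V W : ℕ → ℤ, RowSystem k l U V W ∧ RowSystem k m (X - U) (Y - V) (Z - W)

/-- `U` is the sequence of partial sums of a row which is entrywise between zero and the row with
partial sums `X`. -/
structure IsSubrow (U X : ℕ → ℤ) : Prop where
  zero : U 0 = 0
  mono : Monotone U
  sub_mono : Monotone (X - U)

/-- The partial sums of a row with a single unit entry in position `i`. -/
def unitRow (i t : ℕ) : ℤ := if i < t then 1 else 0

section Subrow

variable {U X : ℕ → ℤ} {i : ℕ}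

theorem unitRow_succ (i t : ℕ) : unitRow i (t + 1) = unitRow i t + if t = i then 1 else 0 := by
  unfold unitRow
  split_ifs <;> omega

theorem unitRow_self (i : ℕ) : unitRow i i = 0 := if_neg (lt_irrefl i)

theorem isSubrow_zero (hX : Monotone X) : IsSubrow (fun _ => 0) X :=
  ⟨rfl, monotone_const, (sub_zero X).symm ▸ hX⟩

theorem IsSubrow.add_unitRow (h : IsSubrow U X) (hi : U (i + 1) - U i < X (i + 1) - X i) :
    IsSubrow (fun t => U t + unitRow i t) X where
  zero := by simp [h.zero, unitRow]
  mono := h.mono.add <| monotone_nat_of_le_succ fun t => by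
    rw [unitRow_succ]
    split_ifs <;> omega
  sub_mono := monotone_nat_of_le_succ fun t => by
    have := h.sub_mono (Nat.le_succ t)
    simp only [Pi.sub_apply, Nat.succ_eq_add_one, unitRow_succ] at this ⊢
    split_ifs with ht
    · subst ht
      omega
    · omega

theorem isSubrow_unitRow (hX : Monotone X) (hi : X i < X (i + 1)) : IsSubrow (unitRow i) X := by
  simpa using (isSubrow_zero hX).add_unitRow (i := i) (by simpa using hi)

theorem isSubrow_unitRow_add_unitRow {j : ℕ} (hX : Monotone X) (hi : X i < X (i + 1))
    (hj : X j < X (j + 1)) (hij : i = j → X i + 1 < X (i + 1)) :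
    IsSubrow (fun t => unitRow i t + unitRow j t) X := by
  refine (isSubrow_unitRow hX hi).add_unitRow ?_
  rw [unitRow_succ]
  split_ifs with h
  · subst h
    omega
  · omega

theorem isSubrow_min_const {c : ℤ} (hX0 : X 0 = 0) (hX : Monotone X) (hc : 0 ≤ c) :
    IsSubrow (fun t => min c (X t)) X where
  zero := by simp [hX0, hc]
  mono _ _ hst := min_le_min_left c (hX hst)
  sub_mono s t hst := by
    have := hX hst
    simp only [Pi.sub_apply]
    omega

theorem isSubrow_min_one (hX0 : X 0 = 0) (hX : Monotone X) :
    IsSubrow (fun t => min 1 (X t)) X :=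
  isSubrow_min_const hX0 hX zero_le_one

theorem IsSubrow.comp_min (h : IsSubrow U X) (j : ℕ) : IsSubrow (fun t => U (min t j)) X where
  zero := by simp [h.zero]
  mono _ _ hst := h.mono (min_le_min_right j hst)
  sub_mono s t hst := by
    have h1 := h.sub_mono (min_le_min_right j hst)
    have h2 := h.sub_mono hst
    have h3 := h.mono hst
    have h4 := h.sub_mono (min_le_left t j)
    have h5 := h.mono (min_le_left t j)
    simp only [Pi.sub_apply] at h1 h2 h4 ⊢
    grind

end Subrow

section Criterion

variable {k : ℕ} {m : ℤ} {X Y Z U V W : ℕ → ℤ}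

theorem pathSum_sub (X Y Z U V W : ℕ → ℤ) (a b e : ℕ) :
    pathSum (X - U) (Y - V) (Z - W) a b e = pathSum X Y Z a b e - pathSum U V W a b e := by
  simp only [pathSum, Pi.sub_apply]
  ring

theorem RowSystem.rowSplit_of_isSubrow (h : RowSystem k m X Y Z)
    (hU : IsSubrow U X) (hV : IsSubrow V Y) (hW : IsSubrow W Z)
    (short : ∀ a b, a ≤ b → b < k → pathSum U V W a b k ≤ 1 ∧
      pathSum X Y Z a b k ≤ m - 1 + pathSum U V W a b k)
    (long : ∀ a b, 1 ≤ a → a ≤ b → b ≤ k → pathSum U V W a b (k + 1) ≤ 1 + U 1 ∧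
      pathSum X Y Z a b (k + 1) - X 1 ≤ m - 1 + (pathSum U V W a b (k + 1) - U 1))
    (double : ∀ a b, b < a → a ≤ k + 1 → b ≤ k →
      pathSum U V W a b (k + 1) + V (k + 2) ≤ 2 ∧
      pathSum X Y Z a b (k + 1) + Y (k + 2) ≤
        2 * m - 2 + (pathSum U V W a b (k + 1) + V (k + 2)))
    (top : U (k + 2) + V (k + 2) ≤ 2 ∧
      X (k + 2) + Y (k + 2) ≤ 2 * m - 2 + (U (k + 2) + V (k + 2))) :
    RowSplit k 1 (m - 1) X Y Z := by
  refine ⟨U, V, W, ⟨hU.zero, hV.zero, hW.zero, hU.mono, hV.mono, hW.mono,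
    fun a b h1 h2 => (short a b h1 h2).1, fun a b h1 h2 h3 => (long a b h1 h2 h3).1,
    fun a b h1 h2 h3 => (double a b h1 h2 h3).1, top.1⟩,
    ⟨by simp [h.x_zero, hU.zero], by simp [h.y_zero, hV.zero], by simp [h.z_zero, hW.zero],
    hU.sub_mono, hV.sub_mono, hW.sub_mono, fun a b h1 h2 => ?_, fun a b h1 h2 h3 => ?_,
    fun a b h1 h2 h3 => ?_, ?_⟩⟩
  · have := short a b h1 h2
    rw [pathSum_sub]
    omega
  · have := long a b h1 h2 h3
    rw [pathSum_sub, Pi.sub_apply]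
    omega
  · have := double a b h1 h2 h3
    rw [pathSum_sub, Pi.sub_apply]
    omega
  · simp only [Pi.sub_apply]
    omega

end Criterion

-- In the names, the first letter is the row of a unit split off from entry `0`, and the second one
-- the row of a unit split off from entry `k`.
section Corners

variable {k : ℕ} {m : ℤ} {X Y Z : ℕ → ℤ}

theorem RowSystem.rowSplit_x_z (h : RowSystem k m X Y Z)
    (hx : 0 < X 1) (hz : Z k < Z (k + 1)) :
    RowSplit k 1 (m - 1) X Y Z := by
  have hX0 := h.x_zero
  have hw := h.double (k + 1) k (by omega) le_rfl le_rfl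
  refine h.rowSplit_of_isSubrow (isSubrow_unitRow h.x_mono (i := 0) (by grind))
    (isSubrow_zero h.y_mono) (isSubrow_unitRow h.z_mono hz) (fun a b hab hb => ?_)
    (fun a b ha hab hb => ?_) (fun a b hab ha hb => ?_) ?_
  · have := h.short a b hab hb
    grind [pathSum, unitRow]
  · have := h.long a b ha hab hb
    grind [pathSum, unitRow]
  · have := h.double a b hab ha hb
    grind [pathSum, unitRow]
  · grind [pathSum, unitRow]

theorem RowSystem.rowSplit_y_z (h : RowSystem k m X Y Z)
    (hx : X 1 = 0) (hy : 0 < Y 1) (hz : Z k < Z (k + 1)) :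
    RowSplit k 1 (m - 1) X Y Z := by
  have hY0 := h.y_zero
  have hw := h.double (k + 1) k (by omega) le_rfl le_rfl
  refine h.rowSplit_of_isSubrow (isSubrow_zero h.x_mono)
    (isSubrow_unitRow h.y_mono (i := 0) (by grind)) (isSubrow_unitRow h.z_mono hz)
    (fun a b hab hb => ?_) (fun a b ha hab hb => ?_) (fun a b hab ha hb => ?_) ?_
  · have := h.short a b hab hb
    have := h.long a b
    grind [pathSum, unitRow]
  · have := h.long a b ha hab hb
    grind [pathSum, unitRow]
  · have := h.double a b hab ha hb
    grind [pathSum, unitRow]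
  · grind [pathSum, unitRow]

theorem RowSystem.rowSplit_z_z (h : RowSystem k m X Y Z) (hk : 1 ≤ k)
    (hx : X 1 = 0) (hy : Y 1 = 0) (hz : Z k < Z (k + 1)) (hzm : m < Z (k + 1)) :
    RowSplit k 1 (m - 1) X Y Z := by
  have hY0 := h.y_zero
  have hZ0 := h.z_zero
  have hX2 : X 1 ≤ X 2 := h.x_mono (by omega)
  have hY2 : Y 1 ≤ Y 2 := h.y_mono (by omega)
  have hB b := h.long 1 b le_rfl
  have hD a := h.double a 0
  refine h.rowSplit_of_isSubrow (isSubrow_zero h.x_mono) (isSubrow_zero h.y_mono)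
    (isSubrow_unitRow_add_unitRow h.z_mono (i := 0) (j := k) (by grind [pathSum]) hz (by omega))
    (fun a b hab hb => ?_) (fun a b ha hab hb => ?_) (fun a b hab ha hb => ?_) ?_
  · have := h.short a b hab hb
    have := h.long a b
    grind [pathSum, unitRow]
  · have := h.long a b ha hab hb
    grind [pathSum, unitRow]
  · have := h.double a b hab ha hb
    grind [pathSum, unitRow]
  · have := hD (k + 1)
    have := h.long 1 k
    grind [pathSum, unitRow]

theorem RowSystem.rowSplit_y_y (h : RowSystem k m X Y Z) (hk : 1 ≤ k)
    (hx : X 1 = 0) (hz : Z k = Z (k + 1)) (hym : m < Y (k + 1)) :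
    RowSplit k 1 (m - 1) X Y Z := by
  have hY0 := h.y_zero
  have hX2 : X 1 ≤ X 2 := h.x_mono (by omega)
  have hB := h.long 1 k le_rfl hk le_rfl
  have hA b := h.short 0 b b.zero_le
  have hA' := hA (k - 1) (by omega)
  have hZ : Z (k - 1) ≤ Z k := h.z_mono (by omega)
  rw [pathSum, Nat.sub_add_cancel hk] at hA'
  refine h.rowSplit_of_isSubrow (isSubrow_zero h.x_mono)
    (isSubrow_unitRow_add_unitRow h.y_mono (i := 0) (j := k) (by grind [pathSum])
      (by grind [pathSum]) (by omega)) (isSubrow_zero h.z_mono)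
    (fun a b hab hb => ?_) (fun a b ha hab hb => ?_) (fun a b hab ha hb => ?_) ?_
  · have := h.short a b hab hb
    have := h.long a k
    have := hA b
    grind [pathSum, unitRow]
  · have := h.long a b ha hab hb
    have := h.long a k
    have := hA b
    grind [pathSum, unitRow]
  · have := h.double a b hab ha hb
    have := h.double (k + 1) k
    have := hA b
    grind [pathSum, unitRow]
  · have := h.top
    grind [pathSum, unitRow]

theorem RowSystem.rowSplit_x_y (h : RowSystem k m X Y Z)
    (hx : 0 < X 1) (hz : Z k = Z (k + 1)) (hy : Y k < Y (k + 1)) (hx' : X (k + 2) = X (k + 1)) :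
    RowSplit k 1 (m - 1) X Y Z := by
  have hX0 := h.x_zero
  refine h.rowSplit_of_isSubrow (isSubrow_unitRow h.x_mono (i := 0) (by grind))
    (isSubrow_unitRow h.y_mono hy) (isSubrow_zero h.z_mono)
    (fun a b hab hb => ?_) (fun a b ha hab hb => ?_) (fun a b hab ha hb => ?_) ?_
  · have := h.short a b hab hb
    grind [pathSum, unitRow]
  · have := h.long a b ha hab hb
    have := h.short a b
    grind [pathSum, unitRow]
  · have := h.double a b hab ha hb
    have := h.double k b
    grind [pathSum, unitRow]
  · have := h.top
    grind [pathSum, unitRow]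

theorem RowSystem.rowSplit_x_x (h : RowSystem k m X Y Z) (hk : 1 ≤ k)
    (hx : 0 < X 1) (hz : Z k = Z (k + 1)) (hy : Y k = Y (k + 1)) (hxm : m < X (k + 1)) :
    RowSplit k 1 (m - 1) X Y Z := by
  have hX0 := h.x_zero
  have hA a := h.short a (k - 1)
  have hZ : Z (k - 1) ≤ Z k := h.z_mono (by omega)
  have hY : Y (k - 1) ≤ Y k := h.y_mono (by omega)
  simp only [pathSum, Nat.sub_add_cancel hk] at hA
  refine h.rowSplit_of_isSubrow
    (isSubrow_unitRow_add_unitRow h.x_mono (i := 0) (j := k) (by grind [pathSum])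
      (by grind [pathSum]) (by omega)) (isSubrow_zero h.y_mono) (isSubrow_zero h.z_mono)
    (fun a b hab hb => ?_) (fun a b ha hab hb => ?_) (fun a b hab ha hb => ?_) ?_
  · have := h.short a b hab hb
    grind [pathSum, unitRow]
  · have := h.long a b ha hab hb
    have := h.short a b
    grind [pathSum, unitRow]
  · have := h.double a b hab ha hb
    have := h.double k b
    grind [pathSum, unitRow]
  · have := h.top
    grind [pathSum, unitRow]

end Corners

/-- The single path inequalities with both corner entries `x₀` and `z_k` included. -/
def RowPlain (k : ℕ) (m : ℤ) (X Y Z : ℕ → ℤ) : Prop :=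
  ∀ a b, a ≤ b → b ≤ k → pathSum X Y Z a b (k + 1) ≤ m

section Plain

variable {k : ℕ} {m : ℤ} {X Y Z U V W : ℕ → ℤ}

theorem RowSystem.x_nonneg (h : RowSystem k m X Y Z) (t : ℕ) : 0 ≤ X t :=
  h.x_zero ▸ h.x_mono t.zero_le

theorem RowSystem.y_nonneg (h : RowSystem k m X Y Z) (t : ℕ) : 0 ≤ Y t :=
  h.y_zero ▸ h.y_mono t.zero_le

theorem RowSystem.rowSplit_of_plain (h : RowSystem k m X Y Z)
    (hU : IsSubrow U X) (hV : IsSubrow V Y) (hW : IsSubrow W Z)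
    (plain : ∀ a b, a ≤ b → b ≤ k → pathSum U V W a b (k + 1) ≤ 1 ∧
      pathSum X Y Z a b (k + 1) ≤ m - 1 + pathSum U V W a b (k + 1))
    (double : ∀ a b, b < a → a ≤ k + 1 → b ≤ k →
      pathSum U V W a b (k + 1) + V (k + 2) ≤ 2 ∧
      pathSum X Y Z a b (k + 1) + Y (k + 2) ≤
        2 * m - 2 + (pathSum U V W a b (k + 1) + V (k + 2)))
    (top : U (k + 2) + V (k + 2) ≤ 2 ∧
      X (k + 2) + Y (k + 2) ≤ 2 * m - 2 + (U (k + 2) + V (k + 2))) :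
    RowSplit k 1 (m - 1) X Y Z := by
  have hU1 := hU.mono (Nat.zero_le 1)
  have hX1 := hU.sub_mono (Nat.zero_le 1)
  have hWk := hW.mono (Nat.le_succ k)
  have hZk := hW.sub_mono (Nat.le_succ k)
  simp only [Pi.sub_apply, hU.zero, h.x_zero] at hU1 hX1 hZk
  refine h.rowSplit_of_isSubrow hU hV hW (fun a b hab hb => ?_) (fun a b _ hab hb => ?_)
    double top
  · have := plain a b hab hb.le
    grind [pathSum]
  · have := plain a b hab hb
    omega

theorem exists_last_argmax (f : ℕ → ℤ) (n : ℕ) :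
    ∃ c ≤ n, (∀ a ≤ n, f a ≤ f c) ∧ ∀ a, c < a → a ≤ n → f a < f c := by
  induction n with
  | zero => exact ⟨0, le_rfl, by simp, by omega⟩
  | succ n ih =>
    obtain ⟨c, hc, hmax, hlast⟩ := ih
    by_cases h : f (n + 1) < f c
    · exact ⟨c, by omega, by grind, by grind⟩
    · exact ⟨n + 1, le_rfl, by grind, by omega⟩

theorem exists_eq_and_lt_succ {f : ℕ → ℤ} (hf : Monotone f) {c d : ℕ} (hcd : c ≤ d)
    (h : f c < f d) : ∃ j, c ≤ j ∧ j < d ∧ f j = f c ∧ f c < f (j + 1) := by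
  induction d, hcd using Nat.le_induction with
  | base => exact absurd h (lt_irrefl _)
  | succ d hcd ih =>
    by_cases hd : f c < f d
    · obtain ⟨j, hcj, hjd, hj⟩ := ih hd
      exact ⟨j, hcj, by omega, hj⟩
    · exact ⟨d, hcd, by omega, le_antisymm (not_lt.mp hd) (hf hcd), h⟩

theorem RowSystem.rowSplit_of_lt_y (h : RowSystem k m X Y Z) (hp : RowPlain k m X Y Z)
    (hY : m < Y (k + 2)) :
    RowSplit k 1 (m - 1) X Y Z := by
  have hp0 := hp 0 k k.zero_le le_rfl
  have hX1 := h.x_nonneg 1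
  have hY0 := h.y_zero
  have hZk : Z k ≤ Z (k + 1) := h.z_mono (by omega)
  have htop := h.top
  obtain ⟨c, hck, hmax, hlast⟩ := exists_last_argmax (fun a => X (a + 1) - Y a) (k + 1)
  have hYc : Y c ≤ Y (k + 1) := h.y_mono hck
  obtain ⟨j, hcj, hjk, hYj, hYj'⟩ :=
    exists_eq_and_lt_succ h.y_mono (show c ≤ k + 2 by omega) (by grind [pathSum])
  have hfirst b (hb : b < j) (hbk : b ≤ k) :
      X (c + 1) - Y c + Y (k + 2) + Y (b + 1) + Z (k + 1) - Z b ≤ 2 * m := by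
    have hX : c ≤ b → X (c + 1) ≤ X (b + 1 + 1) := fun hcb => h.x_mono (by omega)
    have hYb : c ≤ b → Y (b + 1) = Y c := fun hcb =>
      le_antisymm (hYj ▸ h.y_mono hb) (h.y_mono (by omega))
    have := h.double (b + 1) b
    have := h.double c b
    grind [pathSum]
  refine h.rowSplit_of_plain (isSubrow_zero h.x_mono)
    (isSubrow_unitRow_add_unitRow h.y_mono (i := j) (j := k + 1) (by omega) (by grind [pathSum])
      (by grind [pathSum])) (isSubrow_zero h.z_mono)
    (fun a b hab hb => ?_) (fun a b hab ha hb => ?_) ?_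
  · have := hp a b hab hb
    have := hp c b
    have := hfirst b
    grind [pathSum, unitRow]
  · have := h.double a b hab ha hb
    have := hfirst b
    grind [pathSum, unitRow]
  · grind [unitRow]

theorem exists_isSubrow_sub_eq (hZ0 : Z 0 = 0) (hZ : Monotone Z) (j e : ℕ) :
    ∃ W, IsSubrow W Z ∧ ∀ b ≤ e,
      b < j ∧ Z b = 0 ∧ W e - W b = min 1 (Z (min e j)) ∨ (j ≤ b ∨ 0 < Z b) ∧ W e - W b = 0 := by
  refine ⟨_, (isSubrow_min_one hZ0 hZ).comp_min j, fun b hbe => ?_⟩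
  rcases le_or_gt j b with hj | hj
  · simp [hj, hj.trans hbe]
  · have h1 := hZ (show b ≤ min e j by omega)
    have h2 := hZ b.zero_le
    rw [min_eq_left hj.le]
    omega

theorem RowSystem.rowSplit_first_y (h : RowSystem k m X Y Z) (hp : RowPlain k m X Y Z)
    (hY : Y (k + 2) ≤ m) {j : ℕ} (hjk : j ≤ k + 1) (hXj : X (j + 1) = 0)
    (hYj : Y j = 0) (hYj' : 0 < Y (j + 1)) :
    RowSplit k 1 (m - 1) X Y Z := by
  have hX0 := h.x_nonneg
  have hYn := h.y_nonneg
  have hY0 := h.y_zero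
  have hZ0 := h.z_zero
  have hXj' a (ha : a ≤ j) : X (a + 1) ≤ X (j + 1) := h.x_mono (by omega)
  have hYa a (ha : j < a) : Y (j + 1) ≤ Y a := h.y_mono ha
  have hYb b (hb : b < j) : Y (b + 1) ≤ Y j := h.y_mono hb
  obtain ⟨W, hW, hw⟩ := exists_isSubrow_sub_eq h.z_zero h.z_mono j (k + 1)
  rw [min_eq_right hjk] at hw
  have hB b (hb : b ≤ k) : Y (b + 1) + (Z (k + 1) - Z b) ≤
      m - 1 + (min 1 (Y (b + 1)) + (W (k + 1) - W b)) := by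
    have := hp 0 0 le_rfl k.zero_le
    have := hp 0 j j.zero_le
    have := hp 0 b b.zero_le hb
    have := hw b (by omega)
    grind [pathSum]
  refine h.rowSplit_of_plain (isSubrow_min_one h.x_zero h.x_mono)
    (isSubrow_min_one h.y_zero h.y_mono) hW
    (fun a b hab hb => ?_) (fun a b hab ha hb => ?_) ?_
  · have := hp a b hab hb
    have := hB b hb
    have := hw b (by omega)
    grind [pathSum]
  · have := h.double a b hab ha hb
    have := h.double a 0 (by omega) ha k.zero_le
    have := h.double a j
    have := hB b hb
    have := hw b (by omega)
    rcases le_or_gt a j with haj | haj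
    · have := hXj' a haj
      grind [pathSum]
    · have := hYa a haj
      grind [pathSum]
  · have := h.top
    grind

theorem RowSystem.rowSplit_first_x (h : RowSystem k m X Y Z) (hp : RowPlain k m X Y Z)
    (hm : 1 ≤ m) (hXY : ∀ t ≤ k + 2, X t = 0 → Y t = 0)
    (hA : ∀ a ≤ k + 1, X (a + 1) + Y (k + 2) - Y a ≤ m) :
    RowSplit k 1 (m - 1) X Y Z := by
  obtain ⟨j, hjk, hXj, hXj'⟩ :
      ∃ j ≤ k + 2, X j = 0 ∧ ∀ t ≤ k + 2, j < t → 0 < X t := by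
    rcases (h.x_nonneg (k + 2)).eq_or_lt with h0 | h0
    · exact ⟨k + 2, le_rfl, h0.symm, by omega⟩
    · obtain ⟨j, -, hj, hj0, hj'⟩ := exists_eq_and_lt_succ h.x_mono (k + 2).zero_le
        (show X 0 < X (k + 2) from h.x_zero.symm ▸ h0)
      exact ⟨j, hj.le, hj0.trans h.x_zero, fun t _ ht =>
        (h.x_zero ▸ hj').trans_le (h.x_mono ht)⟩
  have hX0 t (ht : t ≤ j) : X t = 0 := le_antisymm (hXj ▸ h.x_mono ht) (h.x_nonneg t)
  have hZ0 := h.z_zero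
  obtain ⟨W, hW, hw⟩ := exists_isSubrow_sub_eq h.z_zero h.z_mono j (k + 1)
  have hB b (hb : b ≤ k) : Y (b + 1) + (Z (k + 1) - Z b) ≤ m - 1 + (W (k + 1) - W b) := by
    have := hp 0 0 le_rfl k.zero_le
    have := hp j j le_rfl
    have := hp j b
    have := hw b (by omega)
    have := h.y_nonneg (j + 1)
    grind [pathSum]
  have hY : Y (k + 2) < m := by
    have := hA j
    grind
  refine h.rowSplit_of_plain (isSubrow_min_one h.x_zero h.x_mono) (isSubrow_zero h.y_mono) hW
    (fun a b hab hb => ?_) (fun a b hab ha hb => ?_) ?_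
  · have := hp a b hab hb
    have := hB b hb
    have := hw b (by omega)
    grind [pathSum]
  · have := hA a ha
    have := hB b hb
    have := hw b (by omega)
    grind [pathSum]
  · have := hA (k + 1) le_rfl
    have : Y (k + 1) ≤ Y (k + 2) := h.y_mono (by omega)
    grind

theorem RowSystem.add_sub_lt (h : RowSystem k m X Y Z) (hp : RowPlain k m X Y Z)
    (hY : Y (k + 2) ≤ m) {c : ℕ} (hck : c ≤ k + 1) (hc : m < X (c + 1) + Y (k + 2) - Y c)
    {b : ℕ} (hb : b ≤ k) : Y (b + 1) + (Z (k + 1) - Z b) < m := by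
  rcases le_or_gt c b with hcb | hcb
  · have := hp c b hcb hb
    grind [pathSum]
  · have := h.double c b hcb hck hb
    grind [pathSum]

theorem RowSystem.rowSplit_x_y_last (h : RowSystem k m X Y Z) (hp : RowPlain k m X Y Z)
    (hXY : ∀ a ≤ k + 1, X (a + 1) = 0 → Y a = 0) (hY : Y (k + 2) ≤ m)
    (hB : ∀ b ≤ k, Y (b + 1) + (Z (k + 1) - Z b) < m) (hy : Y (k + 1) < Y (k + 2)) :
    RowSplit k 1 (m - 1) X Y Z := by
  have hX0 := h.x_nonneg
  refine h.rowSplit_of_plain (isSubrow_min_one h.x_zero h.x_mono) (isSubrow_unitRow h.y_mono hy)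
    (isSubrow_zero h.z_mono) (fun a b hab hb => ?_) (fun a b hab ha hb => ?_) ?_
  · have := hp a b hab hb
    have := hB b hb
    have := hXY a
    grind [pathSum, unitRow]
  · have := h.double a b hab ha hb
    have := hB b hb
    have := hXY a ha
    grind [pathSum, unitRow]
  · have := h.top
    grind [unitRow]

theorem RowSystem.rowSplit_x_x_last (h : RowSystem k m X Y Z) (hp : RowPlain k m X Y Z)
    (hXY : ∀ a ≤ k + 1, X (a + 1) = 0 → Y a = 0) (hY : Y (k + 1) = Y (k + 2))
    (hB : ∀ b ≤ k, Y (b + 1) + (Z (k + 1) - Z b) < m) (hXm : m < X (k + 2)) :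
    RowSplit k 1 (m - 1) X Y Z := by
  have hX0 := h.x_nonneg
  have hYk : Y k ≤ Y (k + 1) := h.y_mono (by omega)
  have hZk : Z k ≤ Z (k + 1) := h.z_mono (by omega)
  have hU : IsSubrow (fun t => min 1 (X t) + unitRow (k + 1) t) X := by
    have := hp k k le_rfl le_rfl
    refine (isSubrow_min_one h.x_zero h.x_mono).add_unitRow ?_
    grind [pathSum]
  refine h.rowSplit_of_plain hU (isSubrow_zero h.y_mono) (isSubrow_zero h.z_mono)
    (fun a b hab hb => ?_) (fun a b hab ha hb => ?_) ?_
  · have := hp a b hab hb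
    have := hB b hb
    have := hXY a
    grind [pathSum, unitRow]
  · have := h.double a b hab ha hb
    have := hB b hb
    have := hp a k
    have := hXY a ha
    grind [pathSum, unitRow]
  · have := h.top
    grind [unitRow]

theorem RowSystem.rowSplit_of_rowPlain (h : RowSystem k m X Y Z) (hp : RowPlain k m X Y Z)
    (hm : 1 ≤ m) : RowSplit k 1 (m - 1) X Y Z := by
  rcases lt_or_ge m (Y (k + 2)) with hY | hY
  · exact h.rowSplit_of_lt_y hp hY
  by_cases hXY : ∀ t ≤ k + 2, X t = 0 → Y t = 0
  · by_cases hA : ∀ a ≤ k + 1, X (a + 1) + Y (k + 2) - Y a ≤ m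
    · exact h.rowSplit_first_x hp hm hXY hA
    push Not at hA
    obtain ⟨c, hck, hc⟩ := hA
    have hXY' a (ha : a ≤ k + 1) (h0 : X (a + 1) = 0) : Y a = 0 :=
      le_antisymm (hXY (a + 1) (by omega) h0 ▸ h.y_mono a.le_succ) (h.y_nonneg a)
    have hB b (hb : b ≤ k) := h.add_sub_lt hp hY hck hc hb
    rcases (h.y_mono (Nat.le_succ (k + 1))).lt_or_eq with hy | hy
    · exact h.rowSplit_x_y_last hp hXY' hY hB hy
    have hXk : X (c + 1) ≤ X (k + 2) := h.x_mono (by omega)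
    have hZk : Z k ≤ Z (k + 1) := h.z_mono (by omega)
    have := hp c k
    exact h.rowSplit_x_x_last hp hXY' hy hB (by grind [pathSum])
  · push Not at hXY
    obtain ⟨t, htk, hXt, hYt⟩ := hXY
    have hYt' : Y 0 < Y t := h.y_zero.symm ▸ (h.y_nonneg t).lt_of_ne' hYt
    obtain ⟨j, -, hjt, hj0, hj⟩ := exists_eq_and_lt_succ h.y_mono t.zero_le hYt'
    exact h.rowSplit_first_y hp hY (by omega)
      (le_antisymm (hXt ▸ h.x_mono hjt) (h.x_nonneg _)) (hj0.trans h.y_zero) (h.y_zero ▸ hj)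

end Plain

section Splitting

variable {k : ℕ} {l m : ℤ} {X Y Z U V W : ℕ → ℤ}

theorem RowSystem.rowSplit_of_not_exceptional (h : RowSystem k m X Y Z) (hk : 1 ≤ k) (hm : 1 ≤ m)
    (hexc : ¬(0 < X 1 ∧ Z k = Z (k + 1) ∧ Y k < Y (k + 1) ∧ X (k + 1) < X (k + 2))) :
    RowSplit k 1 (m - 1) X Y Z := by
  have hX1 := h.x_zero ▸ h.x_mono (Nat.zero_le 1)
  have hX2 : X 1 ≤ X 2 := h.x_mono (by omega)
  have hY0 := h.y_zero
  have hZ0 := h.z_zero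
  rcases hX1.eq_or_lt' with hx | hx <;> rcases (h.z_mono k.le_succ).eq_or_lt with hz | hz
  · rcases lt_or_ge m (Y (k + 1)) with hym | hym
    · exact h.rowSplit_y_y hk hx hz hym
    · refine h.rowSplit_of_rowPlain (fun a b hab hb => ?_) hm
      have := h.short a b
      have := h.long a b
      grind [pathSum]
  · rcases (h.y_mono (Nat.zero_le 1)).eq_or_lt with hy | hy
    · rcases lt_or_ge m (Z (k + 1)) with hzm | hzm
      · exact h.rowSplit_z_z hk hx (hy.symm.trans hY0) hz hzm
      · refine h.rowSplit_of_rowPlain (fun a b hab hb => ?_) hm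
        have := h.long 1 b
        have := h.long a b
        grind [pathSum]
    · exact h.rowSplit_y_z hx (hY0 ▸ hy) hz
  · rcases (h.y_mono k.le_succ).eq_or_lt with hy | hy
    · rcases lt_or_ge m (X (k + 1)) with hxm | hxm
      · exact h.rowSplit_x_x hk hx hz hy hxm
      · refine h.rowSplit_of_rowPlain (fun a b hab hb => ?_) hm
        have := h.short a (k - 1)
        have := h.short a b
        have : Z (k - 1) ≤ Z k := h.z_mono (by omega)
        grind [pathSum]
    · exact h.rowSplit_x_y hx hz hy
        (le_antisymm (not_lt.mp fun hx' => hexc ⟨hx, hz, hy, hx'⟩) (h.x_mono (by omega)))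
  · exact h.rowSplit_x_z hx hz

theorem pathSum_add (X Y Z U V W : ℕ → ℤ) (a b e : ℕ) :
    pathSum (X + U) (Y + V) (Z + W) a b e = pathSum X Y Z a b e + pathSum U V W a b e := by
  simp only [pathSum, Pi.add_apply]
  ring

theorem RowSystem.add (h : RowSystem k l U V W) (h' : RowSystem k m X Y Z) :
    RowSystem k (l + m) (U + X) (V + Y) (W + Z) where
  x_zero := by simp [h.x_zero, h'.x_zero]
  y_zero := by simp [h.y_zero, h'.y_zero]
  z_zero := by simp [h.z_zero, h'.z_zero]
  x_mono := h.x_mono.add h'.x_mono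
  y_mono := h.y_mono.add h'.y_mono
  z_mono := h.z_mono.add h'.z_mono
  short a b hab hb := by
    rw [pathSum_add]
    exact add_le_add (h.short a b hab hb) (h'.short a b hab hb)
  long a b ha hab hb := by
    have := h.long a b ha hab hb
    have := h'.long a b ha hab hb
    rw [pathSum_add, Pi.add_apply]
    omega
  double a b hab ha hb := by
    have := h.double a b hab ha hb
    have := h'.double a b hab ha hb
    rw [pathSum_add, Pi.add_apply]
    omega
  top := by
    have := h.top
    have := h'.top
    simp only [Pi.add_apply]
    omega

theorem unitRow_mono (i : ℕ) : Monotone (unitRow i) := fun s t hst => by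
  unfold unitRow
  split_ifs <;> omega

theorem RowSystem.twist (h : RowSystem k m X Y Z) (hz : Z k = Z (k + 1))
    (htop : X (k + 2) + Y (k + 2) < 2 * m) :
    RowSystem k (m + 1) (X + (unitRow 0 + unitRow (k + 1))) (Y + unitRow k) Z where
  x_zero := by simp [h.x_zero, unitRow]
  y_zero := by simp [h.y_zero, unitRow]
  z_zero := h.z_zero
  x_mono := h.x_mono.add ((unitRow_mono 0).add (unitRow_mono (k + 1)))
  y_mono := h.y_mono.add (unitRow_mono k)
  z_mono := h.z_mono
  short a b hab hb := by
    have := h.short a b hab hb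
    simp only [pathSum, unitRow, Pi.add_apply] at *
    grind
  long a b ha hab hb := by
    have := h.long a b ha hab hb
    simp only [pathSum, unitRow, Pi.add_apply] at *
    grind
  double a b hab ha hb := by
    have := h.double a b hab ha hb
    simp only [pathSum, unitRow, Pi.add_apply] at *
    grind
  top := by
    simp only [unitRow, Pi.add_apply] at *
    grind

theorem RowSystem.untwist (h : RowSystem k m X Y Z) (hx : 0 < X 1) (hz : Z k = Z (k + 1))
    (hy : Y k < Y (k + 1)) (hx' : X (k + 1) < X (k + 2)) :
    RowSystem k (m - 1) (X - (unitRow 0 + unitRow (k + 1))) (Y - unitRow k) Z where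
  x_zero := by simp [h.x_zero, unitRow]
  y_zero := by simp [h.y_zero, unitRow]
  z_zero := h.z_zero
  x_mono := by
    have := h.x_zero
    refine (isSubrow_unitRow_add_unitRow h.x_mono (i := 0) (j := k + 1) ?_ hx' ?_).sub_mono <;>
      grind
  y_mono := (isSubrow_unitRow h.y_mono hy).sub_mono
  z_mono := h.z_mono
  short a b hab hb := by
    have := h.short a b hab hb
    simp only [pathSum, unitRow, Pi.add_apply, Pi.sub_apply] at *
    grind
  long a b ha hab hb := by
    have := h.long a b ha hab hb
    have := h.short a b
    simp only [pathSum, unitRow, Pi.add_apply, Pi.sub_apply] at *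
    grind
  double a b hab ha hb := by
    have := h.double a b hab ha hb
    simp only [pathSum, unitRow, Pi.add_apply, Pi.sub_apply] at *
    grind
  top := by
    have := h.top
    simp only [unitRow, Pi.add_apply, Pi.sub_apply] at *
    grind

theorem rowSystem_unitRow_unitRow (k : ℕ) : RowSystem k 1 (unitRow 0) (unitRow k) 0 where
  x_zero := unitRow_self 0
  y_zero := if_neg (by omega)
  z_zero := rfl
  x_mono := unitRow_mono 0
  y_mono := unitRow_mono k
  z_mono := monotone_const
  short a b _ _ := by
    simp only [pathSum, unitRow, Pi.zero_apply]
    grind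
  long a b _ _ _ := by
    simp only [pathSum, unitRow, Pi.zero_apply]
    grind
  double a b _ _ _ := by
    simp only [pathSum, unitRow, Pi.zero_apply]
    grind
  top := by
    simp only [unitRow]
    grind

theorem RowSystem.add_unitRow_last (h : RowSystem k 1 X Y Z) (hz : Z k = Z (k + 1))
    (htop : X (k + 2) + Y (k + 2) ≤ 0) :
    RowSystem k 1 (X + unitRow (k + 1)) Y Z where
  x_zero := by simp [h.x_zero, unitRow]
  y_zero := h.y_zero
  z_zero := h.z_zero
  x_mono := h.x_mono.add (unitRow_mono (k + 1))
  y_mono := h.y_mono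
  z_mono := h.z_mono
  short a b hab hb := by
    have := h.short a b hab hb
    simp only [pathSum, unitRow, Pi.add_apply] at *
    grind
  long a b ha hab hb := by
    have := h.long a b ha hab hb
    simp only [pathSum, unitRow, Pi.add_apply] at *
    grind
  double a b hab ha hb := by
    have := h.double a b hab ha hb
    have := h.short 0 b
    have := h.x_nonneg 1
    have := h.y_nonneg (b + 1)
    have := h.y_zero
    have : Y (b + 1) ≤ Y (k + 2) := h.y_mono (by omega)
    have : Y (b + 1) ≤ Y a := h.y_mono (by omega)
    simp only [pathSum, unitRow, Pi.add_apply] at *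
    grind
  top := by
    simp only [unitRow, Pi.add_apply] at *
    grind

theorem RowSplit.congr {X' Y' Z' : ℕ → ℤ} {l' m' : ℤ} (h : RowSplit k l' m' X' Y' Z')
    (hl : l' = l) (hm : m' = m) (hX : X' = X) (hY : Y' = Y) (hZ : Z' = Z) :
    RowSplit k l m X Y Z := by
  subst_vars
  exact h

theorem RowSystem.rowSplit_add (h : RowSystem k l U V W) (h' : RowSystem k m X Y Z) :
    RowSplit k l m (U + X) (V + Y) (W + Z) :=
  ⟨U, V, W, h, by simpa only [add_sub_cancel_left] using h'⟩

theorem RowSplit.of_untwist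
    (h : RowSplit k 1 (m - 2) (X - (unitRow 0 + unitRow (k + 1))) (Y - unitRow k) Z)
    (hz : Z k = Z (k + 1)) (htop : X (k + 2) + Y (k + 2) ≤ 2 * m) :
    RowSplit k 1 (m - 1) X Y Z ∨
      X (k + 2) + Y (k + 2) = 2 * m ∧ RowSplit k 2 (m - 2) X Y Z := by
  obtain ⟨U, V, W, hO, hσ⟩ := h
  have hWO : W k ≤ W (k + 1) := hO.z_mono (by omega)
  have hWσ : (Z - W) k ≤ (Z - W) (k + 1) := hσ.z_mono (by omega)
  simp only [Pi.sub_apply] at hWσ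
  have hzO : W k = W (k + 1) := by omega
  have hzσ : (Z - W) k = (Z - W) (k + 1) := by
    simp only [Pi.sub_apply]
    omega
  have hsum : X (k + 2) + Y (k + 2) = U (k + 2) + V (k + 2) + 3 +
      ((X - (unitRow 0 + unitRow (k + 1)) - U) (k + 2) + (Y - unitRow k - V) (k + 2)) := by
    simp only [Pi.sub_apply, Pi.add_apply, unitRow]
    grind
  by_cases hσtop : (X - (unitRow 0 + unitRow (k + 1)) - U) (k + 2) + (Y - unitRow k - V) (k + 2) <
      2 * (m - 2)
  · exact .inl ((hO.rowSplit_add (hσ.twist hzσ hσtop)).congr rfl (by ring) (by abel) (by abel)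
      (by abel))
  rcases htop.lt_or_eq with hlt | heq
  · exact .inl (((rowSystem_unitRow_unitRow k).rowSplit_add
      ((hO.add_unitRow_last hzO (by omega)).add hσ)).congr rfl (by ring) (by abel) (by abel)
      (by abel))
  · exact .inr ⟨heq, ((hO.twist hzO (by omega)).rowSplit_add hσ).congr (by norm_num) rfl
      (by abel) (by abel) (by abel)⟩

theorem RowSystem.rowSplit_one_or_two (hk : 1 ≤ k) {m : ℕ} (hm : 1 ≤ m)
    (h : RowSystem k m X Y Z) :
    RowSplit k 1 (m - 1) X Y Z ∨
      X (k + 2) + Y (k + 2) = 2 * m ∧ RowSplit k 2 (m - 2) X Y Z := by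
  induction m, hm using Nat.le_induction generalizing X Y Z with
  | base =>
    refine .inl (h.rowSplit_of_not_exceptional hk le_rfl ?_)
    rintro ⟨hx, hz, hy, hx'⟩
    have h' := h.untwist hx hz hy hx'
    have hX := h'.x_nonneg (k + 2)
    have hY := h'.y_nonneg (k + 2)
    have := h.top
    simp only [Pi.sub_apply, Pi.add_apply, unitRow] at hX hY
    grind
  | succ m hm ih =>
    by_cases hexc : 0 < X 1 ∧ Z k = Z (k + 1) ∧ Y k < Y (k + 1) ∧ X (k + 1) < X (k + 2)
    · obtain ⟨hx, hz, hy, hx'⟩ := hexc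
      have h' := h.untwist hx hz hy hx'
      have htop := h.top
      push_cast at h' htop ⊢
      rw [add_sub_cancel_right] at h'
      obtain hs | ⟨heq, -⟩ := ih h'
      · exact RowSplit.of_untwist (hs.congr rfl (by ring) rfl rfl rfl) hz htop
      · simp only [Pi.sub_apply, Pi.add_apply, unitRow] at heq
        grind
    · exact .inl (h.rowSplit_of_not_exceptional hk (by omega) hexc)

theorem RowSystem.rowSplit_two (hk : 1 ≤ k) {m : ℕ} (hm : 2 ≤ m) (h : RowSystem k m X Y Z) :
    RowSplit k 2 (m - 2) X Y Z := by
  induction m, hm using Nat.le_induction generalizing X Y Z with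
  | base =>
    refine ⟨X, Y, Z, h, ?_⟩
    simp only [sub_self]
    exact ⟨rfl, rfl, rfl, monotone_const, monotone_const, monotone_const, by simp [pathSum],
      by simp [pathSum], by simp [pathSum], by simp⟩
  | succ m hm ih =>
    obtain ⟨U, V, W, hO, hσ⟩ | ⟨-, hs⟩ := h.rowSplit_one_or_two hk (by omega)
    · rw [Nat.cast_add_one, add_sub_cancel_right] at hσ
      obtain ⟨P, Q, R, hP, hτ⟩ := ih hσ
      exact (hP.rowSplit_add (hO.add hτ)).congr rfl (by push_cast; ring) (by abel) (by abel)
        (by abel)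
    · exact hs

theorem RowSystem.congr_x {X' : ℕ → ℤ} (h : RowSystem k m X Y Z) (hX' : Monotone X')
    (hXX' : ∀ t ≤ k + 2, X' t = X t) : RowSystem k m X' Y Z where
  x_zero := (hXX' 0 (by omega)).trans h.x_zero
  y_zero := h.y_zero
  z_zero := h.z_zero
  x_mono := hX'
  y_mono := h.y_mono
  z_mono := h.z_mono
  short a b hab hb := by
    rw [pathSum, hXX' _ (by omega)]
    exact h.short a b hab hb
  long a b ha hab hb := by
    rw [pathSum, hXX' _ (by omega), hXX' 1 (by omega)]
    exact h.long a b ha hab hb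
  double a b hab ha hb := by
    rw [pathSum, hXX' _ (by omega)]
    exact h.double a b hab ha hb
  top := by
    rw [hXX' _ le_rfl]
    exact h.top

theorem RowSplit.exists_top_le (h : RowSplit k l m X Y Z) (hX : Monotone X)
    (htop : X (k + 3) + Y (k + 2) ≤ 2 * (l + m)) :
    ∃ U V W : ℕ → ℤ, (RowSystem k l U V W ∧ U (k + 3) + V (k + 2) ≤ 2 * l) ∧
      RowSystem k m (X - U) (Y - V) (Z - W) ∧ (X - U) (k + 3) + (Y - V) (k + 2) ≤ 2 * m := by
  obtain ⟨U, V, W, hO, hσ⟩ := h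
  have hOtop := hO.top
  have hσtop := hσ.top
  have hX3 : X (k + 2) ≤ X (k + 3) := hX (by omega)
  simp only [Pi.sub_apply] at hσtop
  obtain ⟨u, hu0, huX, hul, hum⟩ : ∃ u, 0 ≤ u ∧ u ≤ X (k + 3) - X (k + 2) ∧
      U (k + 2) + u + V (k + 2) ≤ 2 * l ∧
      X (k + 3) - (U (k + 2) + u) + (Y (k + 2) - V (k + 2)) ≤ 2 * m :=
    ⟨min (X (k + 3) - X (k + 2)) (2 * l - U (k + 2) - V (k + 2)), by omega, by omega, by omega,
      by omega⟩
  let U' : ℕ → ℤ := fun t => if t ≤ k + 2 then U t else U (k + 2) + u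
  have hU' t (ht : t ≤ k + 2) : U' t = U t := if_pos ht
  have hU3 : U' (k + 3) = U (k + 2) + u := if_neg (by omega)
  refine ⟨U', V, W, ⟨hO.congr_x (monotone_nat_of_le_succ fun t => ?_) hU', by rwa [hU3]⟩,
    hσ.congr_x (monotone_nat_of_le_succ fun t => ?_) fun t ht => ?_, ?_⟩
  · have := hO.x_mono t.le_succ
    grind
  · have := hσ.x_mono t.le_succ
    have := hX t.le_succ
    simp only [Pi.sub_apply, Nat.succ_eq_add_one] at *
    grind
  · rw [Pi.sub_apply, Pi.sub_apply, hU' t ht]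
  · rw [Pi.sub_apply, Pi.sub_apply, hU3]
    exact hum

end Splitting

/-- `L` is a path from `u` to `v` made of root steps. -/
def IsRootPath_s6 (L : List (ℕ × ℕ)) (u v : ℕ × ℕ) : Prop :=
  L.IsChain RootStep ∧ L.head? = some u ∧ L.getLast? = some v

/-- The roots `α_{p,q}, …, α_{p,e}` of the `p`-th row. -/
def rowSeg (p q e : ℕ) : List (ℕ × ℕ) := (List.range' q (e + 1 - q)).map (Prod.mk p)

section Paths

variable {L L' : List (ℕ × ℕ)} {u v x : ℕ × ℕ} {n i p q e r : ℕ}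

theorem rowSeg_cons (h : q ≤ e) : rowSeg p q e = (p, q) :: rowSeg p (q + 1) e := by
  rw [rowSeg, rowSeg, show e + 1 - q = e + 1 - (q + 1) + 1 by omega, List.range'_succ,
    List.map_cons]

theorem rowSeg_self (p q : ℕ) : rowSeg p q q = [(p, q)] := by
  simp [rowSeg]

theorem mem_rowSeg : x ∈ rowSeg p q e ↔ x.1 = p ∧ q ≤ x.2 ∧ x.2 ≤ e := by
  obtain ⟨a, b⟩ := x
  simp only [rowSeg, List.mem_map, List.mem_range'_1, Prod.mk.injEq]
  grind

theorem not_isRootPath_nil : ¬ IsRootPath_s6 [] u v := by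
  simp [IsRootPath_s6]

theorem rootStep_iff {w : ℕ × ℕ} : RootStep (p, q) w ↔ w = (p, q + 1) ∨ w = (p + 1, q) := by
  simp only [RootStep, Prod.ext_iff]

theorem isRootPath_cons_iff :
    IsRootPath_s6 (x :: L) (p, q) v ↔ x = (p, q) ∧ (L = [] ∧ (p, q) = v ∨
      IsRootPath_s6 L (p, q + 1) v ∨ IsRootPath_s6 L (p + 1, q) v) := by
  rcases L with _ | ⟨w, L⟩
  · simp +contextual [IsRootPath_s6]
  · simp only [IsRootPath_s6, List.isChain_cons_cons, List.head?_cons, List.getLast?_cons_cons]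
    grind [rootStep_iff]

theorem IsRootPath_s6.ne_nil (h : IsRootPath_s6 L u v) : L ≠ [] := by
  rintro rfl
  exact not_isRootPath_nil h

theorem IsRootPath_s6.le (h : IsRootPath_s6 L u v) : u ≤ v := by
  induction L generalizing u with
  | nil => exact absurd h not_isRootPath_nil
  | cons x L ih =>
    obtain ⟨-, ⟨-, rfl⟩ | hr | hd⟩ := isRootPath_cons_iff.mp h
    · exact le_rfl
    · exact (Prod.mk_le_mk.mpr ⟨le_rfl, u.2.le_succ⟩).trans (ih hr)
    · exact (Prod.mk_le_mk.mpr ⟨u.1.le_succ, le_rfl⟩).trans (ih hd)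

theorem IsRootPath_s6.mem_Icc (h : IsRootPath_s6 L u v) (hx : x ∈ L) : x ∈ Set.Icc u v := by
  induction L generalizing u with
  | nil => exact absurd h not_isRootPath_nil
  | cons y L ih =>
    have hle := h.le
    obtain ⟨rfl, h'⟩ := isRootPath_cons_iff.mp h
    rcases List.mem_cons.mp hx with rfl | hx
    · exact ⟨le_rfl, hle⟩
    obtain ⟨rfl, -⟩ | hr | hd := h'
    · exact absurd hx List.not_mem_nil
    · exact Set.Icc_subset_Icc_left (Prod.mk_le_mk.mpr ⟨le_rfl, u.2.le_succ⟩) (ih hr hx)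
    · exact Set.Icc_subset_Icc_left (Prod.mk_le_mk.mpr ⟨u.1.le_succ, le_rfl⟩) (ih hd hx)

theorem isRootPath_row_iff : IsRootPath_s6 L (p, q) (p, e) ↔ q ≤ e ∧ L = rowSeg p q e := by
  induction L generalizing q with
  | nil =>
    refine iff_of_false not_isRootPath_nil ?_
    rintro ⟨hqe, hL⟩
    rw [rowSeg_cons hqe] at hL
    exact List.cons_ne_nil _ _ hL.symm
  | cons x L ih =>
    rw [isRootPath_cons_iff, ih]
    constructor
    · rintro ⟨rfl, ⟨rfl, h⟩ | ⟨hqe, rfl⟩ | hd⟩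
      · obtain rfl : q = e := congrArg Prod.snd h
        exact ⟨le_rfl, (rowSeg_self p q).symm⟩
      · exact ⟨by omega, (rowSeg_cons (by omega)).symm⟩
      · exact absurd hd.le.1 (Nat.not_succ_le_self _)
    · rintro ⟨hqe, hL⟩
      rw [rowSeg_cons hqe, List.cons.injEq] at hL
      obtain ⟨rfl, rfl⟩ := hL
      refine ⟨rfl, ?_⟩
      rcases hqe.eq_or_lt with rfl | hlt
      · exact .inl ⟨by simp [rowSeg], rfl⟩
      · exact .inr (.inl ⟨hlt, rfl⟩)

theorem isRootPath_iff_of_lt (hpr : p < r) :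
    IsRootPath_s6 L (p, q) (r, e) ↔
      ∃ c L', q ≤ c ∧ L = rowSeg p q c ++ L' ∧ IsRootPath_s6 L' (p + 1, c) (r, e) := by
  induction L generalizing q with
  | nil =>
    refine iff_of_false not_isRootPath_nil ?_
    rintro ⟨c, L', -, hL, hL'⟩
    exact hL'.ne_nil (List.append_eq_nil_iff.mp hL.symm).2
  | cons x L ih =>
    rw [isRootPath_cons_iff, ih]
    constructor
    · rintro ⟨rfl, ⟨rfl, h⟩ | ⟨c, L', hc, rfl, hL'⟩ | hd⟩
      · exact absurd (congrArg Prod.fst h) hpr.ne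
      · exact ⟨c, L', by omega, by rw [rowSeg_cons (by omega : q ≤ c), List.cons_append], hL'⟩
      · exact ⟨q, L, le_rfl, by rw [rowSeg_self, List.singleton_append], hd⟩
    · rintro ⟨c, L', hc, hL, hL'⟩
      rw [rowSeg_cons hc, List.cons_append, List.cons.injEq] at hL
      obtain ⟨rfl, rfl⟩ := hL
      refine ⟨rfl, .inr ?_⟩
      rcases hc.eq_or_lt with rfl | hlt
      · exact .inr (by simpa [rowSeg] using hL')
      · exact .inl ⟨c, L', hlt, rfl, hL'⟩

theorem isRootPath_two_rows_iff :
    IsRootPath_s6 L (p, q) (p + 1, e) ↔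
      ∃ c, q ≤ c ∧ c ≤ e ∧ L = rowSeg p q c ++ rowSeg (p + 1) c e := by
  simp only [isRootPath_iff_of_lt p.lt_succ_self, isRootPath_row_iff]
  grind

theorem isRootPath_three_rows_iff :
    IsRootPath_s6 L (p, q) (p + 2, e) ↔
      ∃ a b, q ≤ a ∧ a ≤ b ∧ b ≤ e ∧
        L = rowSeg p q a ++ (rowSeg (p + 1) a b ++ rowSeg (p + 2) b e) := by
  simp only [isRootPath_iff_of_lt (show p < p + 2 by omega), isRootPath_two_rows_iff]
  constructor
  · rintro ⟨a, L', ha, rfl, b, hab, hb, rfl⟩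
    exact ⟨a, b, ha, hab, hb, rfl⟩
  · rintro ⟨a, b, ha, hab, hb, rfl⟩
    exact ⟨a, _, ha, rfl, b, hab, hb, rfl⟩

theorem isType1_iff :
    IsType1 n i L ↔
      IsRootPath_s6 L (1, i) (i, 2 * n - i - 1) ∨ IsRootPath_s6 L (1, i + 1) (i, 2 * n - i) := by
  constructor
  · rintro ⟨-, hc, -, h | h⟩
    exacts [.inl ⟨hc, h⟩, .inr ⟨hc, h⟩]
  · rintro (h | h)
    all_goals refine ⟨h.ne_nil, h.1, fun x hx => ?_, by simp [h.2]⟩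
    all_goals
      have hx := h.mem_Icc hx
      simp only [Set.mem_Icc, Prod.le_def] at hx
      unfold inR
      omega

theorem isType2_iff :
    IsType2 n i L L' ↔ ∃ j, 1 ≤ j ∧ j < i ∧ IsRootPath_s6 L (1, i) (j, 2 * n - j) ∧
      IsRootPath_s6 L' (2, i) (j + 1, 2 * n - j - 1) ∧ L.Disjoint L' := by
  constructor
  · rintro ⟨j, hj, hji, -, -, hc, hc', -, -, hh, hh', hl, hl', hd⟩
    exact ⟨j, hj, hji, ⟨hc, hh, hl⟩, ⟨hc', hh', hl'⟩, fun x hx hx' => hd x ⟨hx, hx'⟩⟩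
  · rintro ⟨j, hj, hji, h, h', hd⟩
    refine ⟨j, hj, hji, h.ne_nil, h'.ne_nil, h.1, h'.1, fun x hx => ?_, fun x hx => ?_,
      h.2.1, h'.2.1, h.2.2, h'.2.2, fun x hx => hd hx.1 hx.2⟩
    · have hx := h.mem_Icc hx
      simp only [Set.mem_Icc, Prod.le_def] at hx
      unfold inR
      omega
    · have hx := h'.mem_Icc hx
      simp only [Set.mem_Icc, Prod.le_def] at hx
      unfold inR
      omega

end Paths

/-- The partial sums of the `p`-th row of `s`, starting from the third column. -/
def rowSum (s : ℕ × ℕ → ℕ) (p t : ℕ) : ℤ := ∑ q ∈ Finset.range t, (s (p, q + 3) : ℤ)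

/-- The Dyck path inequalities for `i = 3` in terms of the partial sums of the three rows, with
`k = 2n - 6` and with bounds `m` for the single paths and `d` for the double ones. -/
structure DyckBound (k : ℕ) (m d : ℤ) (X Y Z : ℕ → ℤ) : Prop where
  short : ∀ a b, a ≤ b → b < k → pathSum X Y Z a b k ≤ m
  long : ∀ a b, 1 ≤ a → a ≤ b → b ≤ k → pathSum X Y Z a b (k + 1) ≤ m + X 1
  double : ∀ a b, b < a → a ≤ k + 1 → b ≤ k → pathSum X Y Z a b (k + 1) + Y (k + 2) ≤ d
  top : X (k + 3) + Y (k + 2) ≤ d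

/-- The path through the first three rows which enters the first row in column `q`, leaves it in
column `a`, leaves the second one in column `b`, and the third one in column `e - 1`, where columns
are counted from the third one. -/
def threeRowPath (q a b e : ℕ) : List (ℕ × ℕ) :=
  rowSeg 1 (q + 3) (a + 3) ++ (rowSeg 2 (a + 3) (b + 3) ++ rowSeg 3 (b + 3) (e + 2))

section ThirdNode

variable {n k m l : ℕ} {L L' : List (ℕ × ℕ)} {s : ℕ × ℕ → ℕ}

theorem isRootPath_one_three_iff {q e : ℕ} :
    IsRootPath_s6 L (1, q + 3) (3, e + 2) ↔
      ∃ a b, q ≤ a ∧ a ≤ b ∧ b < e ∧ L = threeRowPath q a b e := by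
  refine isRootPath_three_rows_iff.trans ⟨?_, ?_⟩
  · rintro ⟨a, b, ha, hab, hb, rfl⟩
    exact ⟨a - 3, b - 3, by omega, by omega, by omega,
      by simp [threeRowPath, show 3 ≤ a by omega, show 3 ≤ b by omega]⟩
  · rintro ⟨a, b, ha, hab, hb, rfl⟩
    exact ⟨a + 3, b + 3, by omega, by omega, by omega, rfl⟩

theorem isType1_three_iff (hn : 2 * n = k + 6) :
    IsType1 n 3 L ↔
      (∃ a b, 0 ≤ a ∧ a ≤ b ∧ b < k ∧ L = threeRowPath 0 a b k) ∨
      ∃ a b, 1 ≤ a ∧ a ≤ b ∧ b < k + 1 ∧ L = threeRowPath 1 a b (k + 1) := by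
  rw [isType1_iff, show 2 * n - 3 - 1 = k + 2 by omega, show 2 * n - 3 = k + 1 + 2 by omega,
    ← isRootPath_one_three_iff, ← isRootPath_one_three_iff]

theorem disjoint_two_rows_iff {p q a b e e' : ℕ} (hqb : q ≤ b) (hbe : b ≤ e) :
    (rowSeg p q a ++ rowSeg (p + 1) a e).Disjoint
      (rowSeg (p + 1) q b ++ rowSeg (p + 2) b e') ↔ b < a := by
  simp only [List.Disjoint, List.mem_append, mem_rowSeg]
  constructor
  · intro h
    by_contra! hab
    exact h (a := (p + 1, b)) (.inr ⟨rfl, hab, hbe⟩) (.inl ⟨rfl, hqb, le_rfl⟩)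
  · intro h x hx hx'
    omega

theorem isType2_three_iff (hn : 2 * n = k + 6) :
    IsType2 n 3 L L' ↔
      (∃ a b, b < a ∧ a ≤ k + 1 ∧ b ≤ k ∧
        L = rowSeg 1 3 (a + 3) ++ rowSeg 2 (a + 3) (k + 4) ∧
        L' = rowSeg 2 3 (b + 3) ++ rowSeg 3 (b + 3) (k + 3)) ∨
      L = rowSeg 1 3 (k + 5) ∧ L' = rowSeg 2 3 (k + 4) := by
  have h1 : 2 * n - 1 = k + 5 := by omega
  have h2 : 2 * n - 2 = k + 4 := by omega
  have hj (P : ℕ → Prop) : (∃ j, 1 ≤ j ∧ j < 3 ∧ P j) ↔ P 2 ∨ P 1 := by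
    constructor
    · rintro ⟨j, h, h', hP⟩
      obtain rfl | rfl : j = 2 ∨ j = 1 := by omega
      exacts [.inl hP, .inr hP]
    · rintro (h | h)
      exacts [⟨2, by omega, by omega, h⟩, ⟨1, by omega, by omega, h⟩]
  rw [isType2_iff, hj, h1, h2, isRootPath_two_rows_iff, isRootPath_two_rows_iff,
    isRootPath_row_iff, isRootPath_row_iff]
  refine or_congr ?_ ?_
  · constructor
    · rintro ⟨⟨a, ha, hae, rfl⟩, ⟨b, hb, hbe, rfl⟩, hd⟩
      have := (disjoint_two_rows_iff hb (by omega)).mp hd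
      exact ⟨a - 3, b - 3, by omega, by omega, by omega, by simp [ha], by simp [hb]⟩
    · rintro ⟨a, b, hab, ha, hb, rfl, rfl⟩
      exact ⟨⟨a + 3, by omega, by omega, rfl⟩, ⟨b + 3, by omega, by omega, rfl⟩,
        (disjoint_two_rows_iff (by omega) (by omega)).mpr (by omega)⟩
  · constructor
    · rintro ⟨⟨-, hL⟩, ⟨-, hL'⟩, -⟩
      exact ⟨hL, hL'⟩
    · rintro ⟨rfl, rfl⟩
      refine ⟨⟨by omega, rfl⟩, ⟨by omega, rfl⟩, fun x hx hx' => ?_⟩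
      rw [mem_rowSeg] at hx hx'
      omega

theorem rowSum_zero (s : ℕ × ℕ → ℕ) (p : ℕ) : rowSum s p 0 = 0 := rfl

theorem rowSum_succ (s : ℕ × ℕ → ℕ) (p t : ℕ) :
    rowSum s p (t + 1) = rowSum s p t + s (p, t + 3) := Finset.sum_range_succ _ _

theorem rowSum_mono (s : ℕ × ℕ → ℕ) (p : ℕ) : Monotone (rowSum s p) :=
  monotone_nat_of_le_succ fun t => by
    rw [rowSum_succ]
    omega

theorem sum_rowSeg (s : ℕ × ℕ → ℕ) (p : ℕ) {a b : ℕ} (hab : a ≤ b) :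
    (((rowSeg p (a + 3) (b + 3)).map s).sum : ℤ) = rowSum s p (b + 1) - rowSum s p a := by
  induction hab using Nat.decreasingInduction with
  | self =>
    rw [rowSeg_self, rowSum_succ]
    simp
  | of_succ a hab ih =>
    rw [rowSum_succ s p a, Nat.add_right_comm] at ih
    rw [rowSeg_cons (by omega), List.map_cons, List.sum_cons, Nat.cast_add, ih]
    ring

theorem sum_rowSeg_three (s : ℕ × ℕ → ℕ) (p b : ℕ) :
    (((rowSeg p 3 (b + 3)).map s).sum : ℤ) = rowSum s p (b + 1) := by
  simpa [rowSum_zero] using sum_rowSeg s p b.zero_le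

theorem sum_threeRowPath (s : ℕ × ℕ → ℕ) {q a b e : ℕ} (hqa : q ≤ a) (hab : a ≤ b)
    (hbe : b < e) :
    (((threeRowPath q a b e).map s).sum : ℤ) =
      pathSum (rowSum s 1) (rowSum s 2) (rowSum s 3) a b e - rowSum s 1 q := by
  obtain ⟨e, rfl⟩ := Nat.exists_eq_succ_of_ne_zero (show e ≠ 0 by omega)
  rw [threeRowPath, show e.succ + 2 = e + 3 from rfl]
  simp only [List.map_append, List.sum_append, Nat.cast_add]
  rw [sum_rowSeg s 1 hqa, sum_rowSeg s 2 hab, sum_rowSeg s 3 (by omega), pathSum]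
  ring

theorem sum_two_row_paths (s : ℕ × ℕ → ℕ) {a b e : ℕ} (hab : a ≤ e + 1) (hbe : b ≤ e) :
    ((((rowSeg 1 3 (a + 3) ++ rowSeg 2 (a + 3) (e + 4)) ++
        (rowSeg 2 3 (b + 3) ++ rowSeg 3 (b + 3) (e + 3))).map s).sum : ℤ) =
      pathSum (rowSum s 1) (rowSum s 2) (rowSum s 3) a b (e + 1) + rowSum s 2 (e + 2) := by
  simp only [List.map_append, List.sum_append, Nat.cast_add]
  rw [sum_rowSeg_three, sum_rowSeg_three, sum_rowSeg s 2 hab, sum_rowSeg s 3 hbe, pathSum]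
  ring

theorem mem_SD_three_iff (hn : 2 * n = k + 6) :
    s ∈ SD n 3 m ↔ (∀ β, ¬ inR n 3 β → s β = 0) ∧
      DyckBound k m (m * cB n 3 : ℕ) (rowSum s 1) (rowSum s 2) (rowSum s 3) := by
  have hshort a b (hab : a ≤ b) (hb : b < k) := sum_threeRowPath s a.zero_le hab hb
  have hlong a b (ha : 1 ≤ a) (hab : a ≤ b) (hb : b < k + 1) := sum_threeRowPath s ha hab hb
  have hdouble a b (ha : a ≤ k + 1) (hb : b ≤ k) := sum_two_row_paths s ha hb
  have htop : (((rowSeg 1 3 (k + 5) ++ rowSeg 2 3 (k + 4)).map s).sum : ℤ) =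
      rowSum s 1 (k + 3) + rowSum s 2 (k + 2) := by
    rw [List.map_append, List.sum_append, Nat.cast_add, sum_rowSeg_three, sum_rowSeg_three]
  simp only [SD, Set.mem_ofPred_eq, ← Nat.cast_le (α := ℤ)]
  simp only [isType1_three_iff hn, isType2_three_iff hn]
  refine and_congr_right' ⟨fun ⟨hs, hd⟩ => ⟨fun a b hab hb => ?_, fun a b ha hab hb => ?_,
    fun a b hab ha hb => ?_, ?_⟩, fun h => ⟨?_, ?_⟩⟩
  · simpa [hshort a b hab hb, rowSum_zero] using hs _ (.inl ⟨a, b, a.zero_le, hab, hb, rfl⟩)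
  · have := hs _ (.inr ⟨a, b, ha, hab, by omega, rfl⟩)
    rw [hlong a b ha hab (by omega)] at this
    omega
  · rw [← hdouble a b ha hb]
    exact hd _ _ (.inl ⟨a, b, hab, ha, hb, rfl, rfl⟩)
  · rw [← htop]
    exact hd _ _ (.inr ⟨rfl, rfl⟩)
  · rintro _ (⟨a, b, -, hab, hb, rfl⟩ | ⟨a, b, ha, hab, hb, rfl⟩)
    · simpa [hshort a b hab hb, rowSum_zero] using h.short a b hab hb
    · have := h.long a b ha hab (by omega)
      rw [hlong a b ha hab hb]
      omega
  · rintro _ _ (⟨a, b, hab, ha, hb, rfl, rfl⟩ | ⟨rfl, rfl⟩)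
    · rw [hdouble a b ha hb]
      exact h.double a b hab ha hb
    · rw [htop]
      exact h.top

theorem add_mem_SD {i : ℕ} {t : ℕ × ℕ → ℕ} (hs : s ∈ SD n i l) (ht : t ∈ SD n i m) :
    s + t ∈ SD n i (l + m) := by
  have hsum (L : List (ℕ × ℕ)) : (L.map (s + t)).sum = (L.map s).sum + (L.map t).sum :=
    List.sum_map_add
  refine ⟨fun β hβ => ?_, fun L hL => ?_, fun L L' hL => ?_⟩
  · rw [Pi.add_apply, hs.1 β hβ, ht.1 β hβ]
  · rw [hsum]
    exact add_le_add (hs.2.1 L hL) (ht.2.1 L hL)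
  · rw [hsum, add_mul]
    exact add_le_add (hs.2.2 L L' hL) (ht.2.2 L L' hL)

theorem rowSum_sub {t : ℕ × ℕ → ℕ} (hts : t ≤ s) (p : ℕ) :
    rowSum (s - t) p = rowSum s p - rowSum t p := by
  funext a
  rw [Pi.sub_apply, rowSum, rowSum, rowSum, ← Finset.sum_sub_distrib]
  exact Finset.sum_congr rfl fun q _ => Nat.cast_sub (hts _)

theorem rowSum_eq_of_entries {p : ℕ} {U : ℕ → ℤ} (h0 : U 0 = 0) (hU : Monotone U)
    (hs : ∀ q, s (p, q + 3) = (U (q + 1) - U q).toNat) : rowSum s p = U := by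
  funext t
  induction t with
  | zero => rw [h0, rowSum_zero]
  | succ t ih =>
    have : U t ≤ U (t + 1) := hU t.le_succ
    rw [rowSum_succ, ih, hs]
    omega

theorem IsSubrow.entry_le {p : ℕ} {U : ℕ → ℤ} (h : IsSubrow U (rowSum s p)) (q : ℕ) :
    (U (q + 1) - U q).toNat ≤ s (p, q + 3) := by
  have := h.sub_mono q.le_succ
  simp only [Pi.sub_apply, Nat.succ_eq_add_one, rowSum_succ] at this
  omega

end ThirdNode

/-- The multi-exponent supported on the first three rows, from the third column on, whose rows have
the partial sums `U`, `V` and `W`. -/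
def ofRows (U V W : ℕ → ℤ) : ℕ × ℕ → ℕ
  | (1, q + 3) => (U (q + 1) - U q).toNat
  | (2, q + 3) => (V (q + 1) - V q).toNat
  | (3, q + 3) => (W (q + 1) - W q).toNat
  | _ => 0

section Main

variable {n k m l : ℕ} {s : ℕ × ℕ → ℕ} {X Y Z U V W : ℕ → ℤ}

theorem ofRows_le (hU : IsSubrow U (rowSum s 1)) (hV : IsSubrow V (rowSum s 2))
    (hW : IsSubrow W (rowSum s 3)) : ofRows U V W ≤ s := by
  intro β
  unfold ofRows
  split
  exacts [hU.entry_le _, hV.entry_le _, hW.entry_le _, Nat.zero_le _]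

theorem exists_mem_SD_of_isSubrow (hn : 2 * n = k + 6) (hs : ∀ β, ¬ inR n 3 β → s β = 0)
    (hU : IsSubrow U (rowSum s 1)) (hV : IsSubrow V (rowSum s 2)) (hW : IsSubrow W (rowSum s 3))
    (hl : DyckBound k l (l * cB n 3 : ℕ) U V W)
    (hm : DyckBound k m (m * cB n 3 : ℕ) (rowSum s 1 - U) (rowSum s 2 - V) (rowSum s 3 - W)) :
    ∃ t ≤ s, t ∈ SD n 3 l ∧ s - t ∈ SD n 3 m := by
  have hle := ofRows_le hU hV hW
  have hU' : rowSum (ofRows U V W) 1 = U := rowSum_eq_of_entries hU.zero hU.mono fun _ => rfl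
  have hV' : rowSum (ofRows U V W) 2 = V := rowSum_eq_of_entries hV.zero hV.mono fun _ => rfl
  have hW' : rowSum (ofRows U V W) 3 = W := rowSum_eq_of_entries hW.zero hW.mono fun _ => rfl
  refine ⟨ofRows U V W, hle, (mem_SD_three_iff hn).mpr ⟨fun β hβ => ?_, ?_⟩,
    (mem_SD_three_iff hn).mpr ⟨fun β hβ => ?_, ?_⟩⟩
  · exact Nat.le_zero.mp (hs β hβ ▸ hle β)
  · rwa [hU', hV', hW']
  · rw [Pi.sub_apply, hs β hβ, Nat.zero_sub]
  · rwa [rowSum_sub hle, rowSum_sub hle, rowSum_sub hle, hU', hV', hW']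

theorem DyckBound.rowSystem (h : DyckBound k m (2 * m) (rowSum s 1) (rowSum s 2) (rowSum s 3)) :
    RowSystem k m (rowSum s 1) (rowSum s 2) (rowSum s 3) where
  x_zero := rowSum_zero s 1
  y_zero := rowSum_zero s 2
  z_zero := rowSum_zero s 3
  x_mono := rowSum_mono s 1
  y_mono := rowSum_mono s 2
  z_mono := rowSum_mono s 3
  short := h.short
  long := h.long
  double := h.double
  top := by
    have : rowSum s 1 (k + 2) ≤ rowSum s 1 (k + 3) := rowSum_mono s 1 (by omega)
    have := h.top
    omega

theorem RowSystem.dyckBound {m : ℤ} (h : RowSystem k m X Y Z)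
    (htop : X (k + 3) + Y (k + 2) ≤ 2 * m) : DyckBound k m (2 * m) X Y Z :=
  ⟨h.short, h.long, h.double, htop⟩

theorem exists_mem_SD_of_three_lt (hn : 3 < n) (hm : 2 ≤ m) (hs : s ∈ SD n 3 m) :
    ∃ t ≤ s, t ∈ SD n 3 2 ∧ s - t ∈ SD n 3 (m - 2) := by
  obtain ⟨k, hk⟩ : ∃ k, 2 * n = k + 6 := ⟨2 * n - 6, by omega⟩
  have hc (l : ℕ) : ((l * cB n 3 : ℕ) : ℤ) = 2 * l := by
    rw [cB, if_neg (by omega), mul_comm, Nat.cast_mul, Nat.cast_ofNat]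
  obtain ⟨hs0, hs⟩ := (mem_SD_three_iff hk).mp hs
  rw [hc] at hs
  obtain ⟨U, V, W, ⟨hO, hOtop⟩, hσ, hσtop⟩ :=
    (hs.rowSystem.rowSplit_two (by omega) hm).exists_top_le (rowSum_mono s 1)
      (by simpa using hs.top)
  refine exists_mem_SD_of_isSubrow hk hs0 ⟨hO.x_zero, hO.x_mono, hσ.x_mono⟩
    ⟨hO.y_zero, hO.y_mono, hσ.y_mono⟩ ⟨hO.z_zero, hO.z_mono, hσ.z_mono⟩ ?_ ?_
  · rw [hc]
    exact hO.dyckBound hOtop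
  · rw [hc, Nat.cast_sub hm]
    exact hσ.dyckBound hσtop

theorem dyckBound_zero_iff {m d : ℤ} :
    DyckBound 0 m d X Y Z ↔ X 2 + Y 2 + (Z 1 - Z 0) ≤ d ∧ X 3 + Y 2 ≤ d := by
  refine ⟨fun h => ⟨?_, h.top⟩, fun ⟨_, ht⟩ => ⟨by omega, by omega, fun a b hab ha hb => ?_, ht⟩⟩
  · have := h.double 1 0
    grind [pathSum]
  · obtain ⟨rfl, rfl⟩ : a = 1 ∧ b = 0 := by omega
    grind [pathSum]

theorem exists_mem_SD_of_eq_three (hm : 2 ≤ m) (hs : s ∈ SD 3 3 m) :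
    ∃ t ≤ s, t ∈ SD 3 3 2 ∧ s - t ∈ SD 3 3 (m - 2) := by
  have hc (l : ℕ) : l * cB 3 3 = l := by simp [cB]
  have h36 : 2 * 3 = 0 + 6 := rfl
  obtain ⟨hs0, hs⟩ := (mem_SD_three_iff h36).mp hs
  rw [hc, dyckBound_zero_iff] at hs
  have hX : rowSum s 1 2 ≤ rowSum s 1 3 := rowSum_mono s 1 (by omega)
  have hX0 : 0 ≤ rowSum s 1 2 := rowSum_mono s 1 (Nat.zero_le 2)
  have hY0 : 0 ≤ rowSum s 2 2 := rowSum_mono s 2 (Nat.zero_le 2)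
  have hZ0 : 0 ≤ rowSum s 3 1 := rowSum_mono s 3 (Nat.zero_le 1)
  rw [rowSum_zero] at hs
  refine exists_mem_SD_of_isSubrow h36 hs0
    (isSubrow_min_const (rowSum_zero s 1) (rowSum_mono s 1) (c := 2) (by omega))
    (isSubrow_min_const (rowSum_zero s 2) (rowSum_mono s 2)
      (c := 2 - min 2 (rowSum s 1 3)) (by omega))
    (isSubrow_min_const (rowSum_zero s 3) (rowSum_mono s 3)
      (c := 2 - min 2 (rowSum s 1 2) - min (2 - min 2 (rowSum s 1 3)) (rowSum s 2 2))
      (by omega)) ?_ ?_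
  · rw [hc, dyckBound_zero_iff, rowSum_zero]
    constructor <;> grind
  · rw [hc, dyckBound_zero_iff, Nat.cast_sub hm]
    simp only [Pi.sub_apply, rowSum_zero]
    constructor <;> grind

end Main

/-- for `i = 3` and any `n ≥ 3`,
`S(D, m·ω₃) = S(D, (m-2)·ω₃) + S(D, 2·ω₃)` for every `m ≥ 2`. -/
theorem SD_omega3_minkowski (n : ℕ) (hn : 3 ≤ n) (m : ℕ) (hm : 2 ≤ m) :
    SD n 3 m = SD n 3 (m - 2) + SD n 3 2 := by
  ext s
  rw [Set.mem_add]
  constructor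
  · intro hs
    obtain ⟨t, hts, ht, hst⟩ : ∃ t ≤ s, t ∈ SD n 3 2 ∧ s - t ∈ SD n 3 (m - 2) := by
      obtain rfl | hn := hn.eq_or_lt
      · exact exists_mem_SD_of_eq_three hm hs
      · exact exists_mem_SD_of_three_lt hn hm hs
    exact ⟨s - t, hst, t, ht, tsub_add_cancel_of_le hts⟩
  · rintro ⟨s, hs, t, ht, rfl⟩
    simpa only [Nat.sub_add_cancel hm] using add_mem_SD hs ht
end

section
/- Let n = 4 and i = 4. Then for every integer m >= 2, S(D, m*omega_4) = S(D, (m-2)*omega_4) + S(D, 2*omega_4). -/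
open scoped Pointwise

/-! Call `packing 𝓕 m` the set of `s : ι → ℕ` whose sum over each member of a family `𝓕` of
finite sets is at most `m`. For `i = n` there are no type 1 Dyck paths, so `S(D, m·ω_n)` is the
packing of the double Dyck paths, up to the support condition. Two facts decompose packings.
* Let `T ⊆ U` with `|T| = k + 1`. A point of `packing {U \ {x} | x ∈ T} (r + k)` that is positive
  on `T` splits off the indicator of `T`; one that vanishes at some `x ∈ T` has sum at most `r + k`
  over all of `U`, and can be cut greedily.
* Adding to `𝓕` a set `Q ∪ {β}`, where `Q` is contained in a member of `𝓕` and `β` is in none,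
  preserves decomposability: a greedy choice of the value at `β` works.

For `n = 4` there are five double Dyck paths. Three of them are `U \ {x}` with
`U = R_4^+ \ {α_{1,7}, α_{4,4}}` and `x ∈ {α_{1,6}, α_{2,5}, α_{3,4}}`, which gives the summand
`k = 2`; the other two contain `α_{1,7}` and `α_{4,4}` respectively and are added by the second
fact. -/

section Packing

variable {ι : Type*} {𝓕 𝓖 : Set (Finset ι)} {r k m : ℕ}

/-- The lattice points of the packing polytope of a family `𝓕` of finite sets: the functions whose
sum over each member of `𝓕` is at most `m`. -/
def packing (𝓕 : Set (Finset ι)) (m : ℕ) : Set (ι → ℕ) :=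
  {s | ∀ P ∈ 𝓕, ∑ β ∈ P, s β ≤ m}

lemma packing_add_packing_subset (𝓕 : Set (Finset ι)) (r k : ℕ) :
    packing 𝓕 r + packing 𝓕 k ⊆ packing 𝓕 (r + k) := by
  rintro _ ⟨u, hu, t, ht, rfl⟩ P hP
  simpa only [Pi.add_apply, Finset.sum_add_distrib] using add_le_add (hu P hP) (ht P hP)

lemma packing_subset_packing (h : ∀ P ∈ 𝓖, ∃ Q ∈ 𝓕, P ⊆ Q) : packing 𝓕 m ⊆ packing 𝓖 m := by
  intro s hs P hP
  obtain ⟨Q, hQ, hPQ⟩ := h P hP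
  exact (Finset.sum_le_sum_of_subset hPQ).trans (hs Q hQ)

lemma sub_mem_packing {s t : ι → ℕ} (hts : t ≤ s) (hs : s ∈ packing 𝓕 (r + k))
    (ht : ∀ P ∈ 𝓕, k ≤ ∑ β ∈ P, t β) : s - t ∈ packing 𝓕 r := by
  intro P hP
  have hsum : ∑ β ∈ P, (s - t) β + ∑ β ∈ P, t β = ∑ β ∈ P, s β := by
    simp only [← Finset.sum_add_distrib, ← Pi.add_apply, tsub_add_cancel_of_le hts]
  have := hs P hP
  have := ht P hP
  omega

lemma update_mem_packing_insert [DecidableEq ι] {s : ι → ℕ} {Q : Finset ι} {β : ι} {c : ℕ}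
    (hs : s ∈ packing 𝓕 m) (hβQ : β ∉ Q) (hβ : ∀ P ∈ 𝓕, β ∉ P) (hc : c + ∑ γ ∈ Q, s γ ≤ m) :
    Function.update s β c ∈ packing (insert (insert β Q) 𝓕) m := by
  rintro P (rfl | hP)
  · rwa [Finset.sum_insert hβQ, Function.update_self, Finset.sum_update_of_notMem hβQ]
  · rw [Finset.sum_update_of_notMem (hβ P hP)]
    exact hs P hP

lemma packing_insert_subset_add [DecidableEq ι]
    (h : packing 𝓕 (r + k) ⊆ packing 𝓕 r + packing 𝓕 k)
    {P Q : Finset ι} {β : ι} (hP : P ∈ 𝓕) (hQP : Q ⊆ P) (hβ : ∀ P ∈ 𝓕, β ∉ P) :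
    packing (insert (insert β Q) 𝓕) (r + k) ⊆
      packing (insert (insert β Q) 𝓕) r + packing (insert (insert β Q) 𝓕) k := by
  intro s hs
  have hβQ : β ∉ Q := fun hmem => hβ P hP (hQP hmem)
  obtain ⟨u, hu, t, ht, rfl⟩ := h fun P hP => hs P (Set.mem_insert_of_mem _ hP)
  have huQ : ∑ γ ∈ Q, u γ ≤ r := (Finset.sum_le_sum_of_subset hQP).trans (hu P hP)
  have htQ : ∑ γ ∈ Q, t γ ≤ k := (Finset.sum_le_sum_of_subset hQP).trans (ht P hP)
  have hsQ : u β + t β + (∑ γ ∈ Q, u γ + ∑ γ ∈ Q, t γ) ≤ r + k := by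
    simpa [Finset.sum_insert hβQ, Finset.sum_add_distrib] using hs _ (Set.mem_insert _ _)
  obtain ⟨c, d, hcd, hc, hd⟩ : ∃ c d, c + d = u β + t β ∧
      c + ∑ γ ∈ Q, u γ ≤ r ∧ d + ∑ γ ∈ Q, t γ ≤ k :=
    ⟨u β + t β - min (u β + t β) (k - ∑ γ ∈ Q, t γ), min (u β + t β) (k - ∑ γ ∈ Q, t γ),
      by omega, by omega, by omega⟩
  refine ⟨Function.update u β c, update_mem_packing_insert hu hβQ hβ hc,
    Function.update t β d, update_mem_packing_insert ht hβQ hβ hd, ?_⟩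
  simp only [← Function.update_add, hcd, ← Pi.add_apply, Function.update_eq_self]

lemma packing_singleton_subset_add (U : Finset ι) (r k : ℕ) :
    packing {U} (r + k) ⊆ packing {U} r + packing {U} k := by
  classical
  induction U using Finset.induction_on with
  | empty => exact fun s _ => ⟨s, by simp [packing], 0, by simp [packing], add_zero s⟩
  | insert β Q hβ ih =>
    have heq (m : ℕ) : packing {insert β Q, Q} m = packing {insert β Q} m :=
      (packing_subset_packing (by simp)).antisymm (packing_subset_packing (by simp))
    have := packing_insert_subset_add ih rfl subset_rfl (by simpa using hβ)
    rwa [heq, heq, heq] at this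

lemma sum_erase_ite_mem [DecidableEq ι] {U T : Finset ι} {x : ι} (hTU : T ⊆ U) (hx : x ∈ T) :
    ∑ β ∈ U.erase x, (if β ∈ T then 1 else 0) = T.card - 1 := by
  rw [Finset.sum_ite_mem, Finset.erase_inter, Finset.inter_eq_right.2 hTU, Finset.sum_const,
    Finset.card_erase_of_mem hx, smul_eq_mul, mul_one]

lemma packing_erase_subset_add [DecidableEq ι] {U T : Finset ι} (hTU : T ⊆ U)
    (hT : T.card = k + 1) (r : ℕ) :
    packing (U.erase '' T) (r + k) ⊆ packing (U.erase '' T) r + packing (U.erase '' T) k := by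
  intro s hs
  by_cases hpos : ∀ x ∈ T, 1 ≤ s x
  · let t : ι → ℕ := fun β => if β ∈ T then 1 else 0
    have hts : t ≤ s := fun β => by
      by_cases hβ : β ∈ T
      · simpa [t, hβ] using hpos β hβ
      · simp [t, hβ]
    have ht : ∀ P ∈ U.erase '' T, ∑ β ∈ P, t β = k := by
      rintro _ ⟨x, hx, rfl⟩
      rw [sum_erase_ite_mem hTU hx, hT, Nat.add_sub_cancel]
    exact ⟨s - t, sub_mem_packing hts hs fun P hP => (ht P hP).ge,
      t, fun P hP => (ht P hP).le, tsub_add_cancel_of_le hts⟩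
  · push Not at hpos
    obtain ⟨z, hz, hsz⟩ := hpos
    have hsU : s ∈ packing {U} (r + k) := by
      rintro _ rfl
      rw [← Finset.sum_erase _ (Nat.lt_one_iff.1 hsz)]
      exact hs _ ⟨z, hz, rfl⟩
    have hsub (m : ℕ) : packing {U} m ⊆ packing (U.erase '' T) m :=
      packing_subset_packing <| by
        rintro _ ⟨x, -, rfl⟩
        exact ⟨U, rfl, U.erase_subset x⟩
    exact Set.add_subset_add (hsub r) (hsub k) (packing_singleton_subset_add U r k hsU)

end Packing

section DyckPath

variable {n i m r k : ℕ} {a b : ℕ × ℕ} {L L1 L2 : List (ℕ × ℕ)}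

lemma RootStep.lt (h : RootStep a b) : a < b := by
  rcases h with ⟨h1, h2⟩ | ⟨h1, h2⟩ <;> rw [Prod.lt_iff] <;> omega

lemma pairwise_lt_of_isChain_rootStep (h : L.IsChain RootStep) : L.Pairwise (· < ·) :=
  (h.imp fun _ _ => RootStep.lt).pairwise

lemma le_of_isChain_rootStep (h : L.IsChain RootStep) (ha : L.head? = some a) (hb : b ∈ L) :
    a ≤ b := by
  obtain ⟨L', rfl⟩ := List.head?_eq_some_iff.1 ha
  rcases List.mem_cons.1 hb with rfl | hb
  · exact le_rfl
  · exact (List.rel_of_pairwise_cons (pairwise_lt_of_isChain_rootStep h) hb).le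

lemma not_isType1_self (n : ℕ) (L : List (ℕ × ℕ)) : ¬ IsType1 n n L := by
  rintro ⟨-, hchain, hR, ⟨-, hlast⟩ | ⟨hhead, hlast⟩⟩
  · obtain ⟨h1, -, h3, -⟩ := hR _ (List.mem_of_getLast? hlast)
    dsimp only at h1 h3
    omega
  · have := (le_of_isChain_rootStep hchain hhead (List.mem_of_getLast? hlast)).2
    dsimp only at this
    omega

lemma IsType2.nodup_append (h : IsType2 n i L1 L2) : (L1 ++ L2).Nodup := by
  obtain ⟨j, -, -, -, -, hchain1, hchain2, -, -, -, -, -, -, hdisj⟩ := h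
  exact List.nodup_append'.2 ⟨(pairwise_lt_of_isChain_rootStep hchain1).imp ne_of_lt,
    (pairwise_lt_of_isChain_rootStep hchain2).imp ne_of_lt, fun x h1 h2 => hdisj x ⟨h1, h2⟩⟩

/-- The type 2 Dyck paths for `R_i^+`, as sets of roots. -/
def doubleDyckPaths (n i : ℕ) : Set (Finset (ℕ × ℕ)) :=
  {P | ∃ L1 L2, IsType2 n i L1 L2 ∧ (L1 ++ L2).toFinset = P}

lemma SD_self_eq (n m : ℕ) :
    SD n n m = {s | ∀ β, ¬ inR n n β → s β = 0} ∩ packing (doubleDyckPaths n n) m := by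
  have hc : cB n n = 1 := if_pos (Or.inr rfl)
  ext s
  simp only [SD, not_isType1_self, hc, mul_one, false_imp_iff, implies_true, true_and,
    Set.mem_inter_iff, Set.mem_ofPred_eq, packing, doubleDyckPaths]
  refine and_congr_right fun _ => ⟨?_, fun h L1 L2 hL => ?_⟩
  · rintro h _ ⟨L1, L2, hL, rfl⟩
    rw [List.sum_toFinset s hL.nodup_append]
    exact h L1 L2 hL
  · rw [← List.sum_toFinset s hL.nodup_append]
    exact h _ ⟨L1, L2, hL, rfl⟩

lemma SD_self_add_eq (h : packing (doubleDyckPaths n n) (r + k) ⊆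
      packing (doubleDyckPaths n n) r + packing (doubleDyckPaths n n) k) :
    SD n n (r + k) = SD n n r + SD n n k := by
  simp only [SD_self_eq]
  refine Set.Subset.antisymm ?_ ?_
  · rintro s ⟨hsupp, hs⟩
    obtain ⟨u, hu, t, ht, rfl⟩ := h hs
    have hzero (β) (hβ : ¬ inR n n β) : u β = 0 ∧ t β = 0 := Nat.add_eq_zero_iff.1 (hsupp β hβ)
    exact ⟨u, ⟨fun β hβ => (hzero β hβ).1, hu⟩, t, ⟨fun β hβ => (hzero β hβ).2, ht⟩, rfl⟩
  · rintro _ ⟨u, ⟨husupp, hu⟩, t, ⟨htsupp, ht⟩, rfl⟩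
    exact ⟨fun β hβ => by simp [husupp β hβ, htsupp β hβ],
      packing_add_packing_subset _ r k ⟨u, hu, t, ht, rfl⟩⟩

/-- The sequences of `k` root steps starting at `a`, listed so that `decide` can search them. -/
def stepPaths : ℕ → ℕ × ℕ → List (List (ℕ × ℕ))
  | 0, a => [[a]]
  | k + 1, a => (stepPaths k (a.1, a.2 + 1) ++ stepPaths k (a.1 + 1, a.2)).map (a :: ·)

lemma exists_mem_stepPaths (hchain : L.IsChain RootStep) (ha : L.head? = some a)
    (hb : L.getLast? = some b) : ∃ k, b.1 + b.2 = a.1 + a.2 + k ∧ L ∈ stepPaths k a := by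
  induction L generalizing a with
  | nil => cases ha
  | cons x L ih =>
    obtain rfl : x = a := by simpa using ha
    cases L with
    | nil =>
      obtain rfl : x = b := by simpa using hb
      exact ⟨0, rfl, List.mem_singleton_self _⟩
    | cons y L =>
      obtain ⟨hstep, hchain⟩ := List.isChain_cons_cons.1 hchain
      obtain ⟨k, hk, hL⟩ := ih hchain rfl (by simpa using hb)
      refine ⟨k + 1, by rcases hstep with h | h <;> omega,
        List.mem_map_of_mem (List.mem_append.2 ?_)⟩
      rcases hstep with ⟨h1, h2⟩ | ⟨h1, h2⟩
      · exact Or.inl (by rwa [← h1, ← h2])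
      · exact Or.inr (by rwa [← h1, ← h2])

lemma IsType2.mem_stepPaths (h : IsType2 n i L1 L2) :
    L1 ∈ stepPaths (2 * n - i - 1) (1, i) ∧ L2 ∈ stepPaths (2 * n - i - 2) (2, i) := by
  obtain ⟨j, -, -, -, -, hchain1, hchain2, hR1, hR2, hhead1, hhead2, hlast1, hlast2, -⟩ := h
  obtain ⟨k1, hk1, hL1⟩ := exists_mem_stepPaths hchain1 hhead1 hlast1
  obtain ⟨k2, hk2, hL2⟩ := exists_mem_stepPaths hchain2 hhead2 hlast2
  obtain ⟨-, -, -, hsum1⟩ := hR1 _ (List.mem_of_getLast? hlast1)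
  obtain ⟨-, hj, hi, -⟩ := hR2 _ (List.mem_of_getLast? hlast2)
  dsimp only at hk1 hk2 hsum1 hj hi
  obtain rfl : k1 = 2 * n - i - 1 := by omega
  obtain rfl : k2 = 2 * n - i - 2 := by omega
  exact ⟨hL1, hL2⟩

instance : DecidableRel RootStep := fun a b => by unfold RootStep; infer_instance

instance (n i : ℕ) : DecidablePred (inR n i) := fun a => by unfold inR; infer_instance

instance (n i : ℕ) (L1 L2 : List (ℕ × ℕ)) : Decidable (IsType2 n i L1 L2) :=
  decidable_of_iff (∃ j < i, 1 ≤ j ∧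
    L1 ≠ [] ∧ L2 ≠ [] ∧ L1.IsChain RootStep ∧ L2.IsChain RootStep ∧
    (∀ x ∈ L1, inR n i x) ∧ (∀ x ∈ L2, inR n i x) ∧
    L1.head? = some (1, i) ∧ L2.head? = some (2, i) ∧
    L1.getLast? = some (j, 2 * n - j) ∧ L2.getLast? = some (j + 1, 2 * n - j - 1) ∧
    ∀ x ∈ L1, x ∉ L2)
  (by simp only [IsType2, not_and, and_left_comm]; rfl)

end DyckPath

section RankFour

/-- The roots of `R_4^+` for `B_4` other than `α_{1,7}` and `α_{4,4}`, the two roots that lie on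
only one double Dyck path. -/
def coreRoots : Finset (ℕ × ℕ) :=
  {(1, 4), (1, 5), (1, 6), (2, 4), (2, 5), (2, 6), (3, 4), (3, 5)}

lemma doubleDyckPaths_four : doubleDyckPaths 4 4 =
    ((insert (insert (1, 7) (coreRoots \ {(3, 4), (3, 5)}))
      (insert (insert (4, 4) (coreRoots \ {(1, 6), (2, 6)}))
        (({(1, 6), (2, 5), (3, 4)} : Finset (ℕ × ℕ)).image coreRoots.erase)) :
      Finset (Finset (ℕ × ℕ))) : Set (Finset (ℕ × ℕ))) := by
  ext P
  constructor
  · rintro ⟨L1, L2, hL, rfl⟩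
    exact (by decide : ∀ L1 ∈ stepPaths 3 (1, 4), ∀ L2 ∈ stepPaths 2 (2, 4), IsType2 4 4 L1 L2 →
      (L1 ++ L2).toFinset ∈ _) L1 hL.mem_stepPaths.1 L2 hL.mem_stepPaths.2 hL
  · intro hP
    simp only [Finset.mem_coe, Finset.mem_insert, Finset.image_insert, Finset.image_singleton,
      Finset.mem_singleton] at hP
    rcases hP with rfl | rfl | rfl | rfl | rfl
    · exact ⟨[(1, 4), (1, 5), (1, 6), (1, 7)], [(2, 4), (2, 5), (2, 6)], by decide, by decide⟩
    · exact ⟨[(1, 4), (1, 5), (2, 5), (3, 5)], [(2, 4), (3, 4), (4, 4)], by decide, by decide⟩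
    · exact ⟨[(1, 4), (1, 5), (2, 5), (2, 6)], [(2, 4), (3, 4), (3, 5)], by decide, by decide⟩
    · exact ⟨[(1, 4), (1, 5), (1, 6), (2, 6)], [(2, 4), (3, 4), (3, 5)], by decide, by decide⟩
    · exact ⟨[(1, 4), (1, 5), (1, 6), (2, 6)], [(2, 4), (2, 5), (3, 5)], by decide, by decide⟩

lemma packing_doubleDyckPaths_four_subset_add (r : ℕ) :
    packing (doubleDyckPaths 4 4) (r + 2) ⊆
      packing (doubleDyckPaths 4 4) r + packing (doubleDyckPaths 4 4) 2 := by
  let T : Finset (ℕ × ℕ) := {(1, 6), (2, 5), (3, 4)}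
  have hcore := packing_erase_subset_add (U := coreRoots) (T := T) (k := 2) (by decide) rfl r
  have hinsert44 := packing_insert_subset_add (P := coreRoots.erase (1, 6))
    (Q := coreRoots \ {(1, 6), (2, 6)}) (β := (4, 4)) hcore ⟨(1, 6), by decide, rfl⟩ (by decide)
    (Set.forall_mem_image.2 fun x _ => by simp [coreRoots])
  have hinsert17 := packing_insert_subset_add (P := coreRoots.erase (3, 4))
    (Q := coreRoots \ {(3, 4), (3, 5)}) (β := (1, 7)) hinsert44
    (Or.inr ⟨(3, 4), by decide, rfl⟩) (by decide)
    (Set.forall_mem_insert.2 ⟨by decide, Set.forall_mem_image.2 fun x _ => by simp [coreRoots]⟩)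
  rw [doubleDyckPaths_four, Finset.coe_insert, Finset.coe_insert, Finset.coe_image]
  exact hinsert17

end RankFour

/-- for `n = 4`, `i = 4`,
`S(D, m·ω₄) = S(D, (m-2)·ω₄) + S(D, 2·ω₄)` for every `m ≥ 2`. -/
theorem SD_omega4_minkowski (m : ℕ) (hm : 2 ≤ m) :
    SD 4 4 m = SD 4 4 (m - 2) + SD 4 4 2 := by
  obtain ⟨r, rfl⟩ := Nat.exists_eq_add_of_le' hm
  rw [Nat.add_sub_cancel]
  exact SD_self_add_eq (packing_doubleDyckPaths_four_subset_add r)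
end
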